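/- There exists a constant C > 0 such that every ordered binary tree of size n ≥ 1 has a straight-line order-preserving planar grid drawing of some width W and height H with W·H ≤ n·2^{C·log* n}. -/

import Mathlib

/-!
The tree is cut along its heavy path: a *spine* is a path together with the light subtrees hanging
off it. `LRT X Y T` says that `T` has a drawing in a grid of width `X` and height `Y` whose root
lies in the leftmost column and may be joined to any point further left; `LRC X Y s` is the same
for a spine that may moreover be continued to any point further right. `Dr M X Y` says that all
trees, and all spines of at least two path nodes, with at most `M` nodes have such drawings.

*One round* (`Dr.assemble`): from `Dr M X Y` one gets `Dr (t M) (60 Y t) (5 X + 6 k)` for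
`t ≤ 2 ^ k`. The spine is laid out downwards in a vertical strip, with two columns for the path
added around the columns used for the light subtrees. Two consecutive path nodes are put at the
same level on the two sides of the strip; their light subtrees lie between them, each above or below
the edge joining them as the order requires (`pair`). They are followed by a maximal piece of the
spine of weight at most `M`, which is drawn by hypothesis and turned by `π`, leading back to the left
side (`spine_chunk`); if that piece has fewer than two path nodes, the rest is simply drawn reflected (`spine_direct`).
Every two steps use up weight about `M`, so the height is of the order of `Y` times the number of
pieces (`spine_main`, with the budget `Req`). Light subtrees with more than `M` nodes are drawn in
the same way; since the size halves at each such step, this costs two columns for each of at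
most `k` steps (`lrt_ht`), and the heights remain linear in the size (`Qs_spine`). Finally, the first
path node is put on top and the strip is given a quarter turn (`topDrawn`, `TopDrawn.lrt`,
`TopDrawn.lrc`).

*Two rounds* (`Dr.square`) lead from squares of side `κ ℓ` for `ℓ ^ 2` nodes to squares of side
`660 κ t ℓ` for `(t ℓ) ^ 2` nodes, for every `t ≤ 2 ^ ℓ`. So the number of nodes grows
exponentially while the factor `κ` lost in the side is only multiplied by a constant, and `log* n`
iterations suffice (`Dr_tower`, `square_bound`); the constant `C` is `23`.

Crossing-freeness of a drawn tree is the recursive predicate `Good`, and order preservation the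
predicate `Ord` about the signs of cross products, which `ccwAngle_lt` translates into angles.
A drawn tree of the right shape is transferred to the vertices of the graph by `exists_placed`, and
there the crossings of two edges are analysed according to the relative position of their lower
ends (`Placed.cross`, `Placed.straightLine`).
-/

open SimpleGraph

/-- A straight-line planar drawing of a graph `G`: an injective map of vertices to points of
`ℝ²` such that no vertex lies in the interior of (or on) a non-incident edge segment, and any
two distinct edge segments intersect exactly in the images of their common endpoints. -/
def IsStraightLineDrawing {V : Type} (G : SimpleGraph V) (f : V → ℝ × ℝ) : Prop :=
  Function.Injective f ∧
  (∀ u v w : V, G.Adj u v → w ≠ u → w ≠ v → f w ∉ segment ℝ (f u) (f v)) ∧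
  (∀ u v u' v' : V, G.Adj u v → G.Adj u' v' → s(u, v) ≠ s(u', v') →
    segment ℝ (f u) (f v) ∩ segment ℝ (f u') (f v') =
      f '' {w | (w = u ∨ w = v) ∧ (w = u' ∨ w = v')})

/-- A grid drawing of width `W` and height `H`: a straight-line planar drawing with all
vertices on integer grid points of `{1, …, W} × {1, …, H}`. -/
def IsGridDrawing {V : Type} (G : SimpleGraph V) (f : V → ℝ × ℝ) (W H : ℕ) : Prop :=
  IsStraightLineDrawing G f ∧
  ∀ x : V, ∃ i j : ℤ, 1 ≤ i ∧ i ≤ (W : ℤ) ∧ 1 ≤ j ∧ j ≤ (H : ℤ) ∧ f x = ((i : ℝ), (j : ℝ))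

/-- In a tree with distinguished root `r`, `u` is the parent of `v` iff `u` is a neighbor of
`v` lying on the path from `v` to `r` (equivalently, one step closer to the root). -/
def IsParent {V : Type} (G : SimpleGraph V) (r u v : V) : Prop :=
  G.Adj u v ∧ G.dist r u + 1 = G.dist r v

/-- A drawing is upward (w.r.t. root `r`) if every parent is drawn at a `y`-coordinate
greater than or equal to that of each of its children. -/
def IsUpward {V : Type} (G : SimpleGraph V) (r : V) (f : V → ℝ × ℝ) : Prop :=
  ∀ u v : V, IsParent G r u v → (f v).2 ≤ (f u).2

/-- A drawing is orthogonal if every edge is drawn horizontally or vertically. -/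
def IsOrthogonal {V : Type} (G : SimpleGraph V) (f : V → ℝ × ℝ) : Prop :=
  ∀ u v : V, G.Adj u v → (f u).1 = (f v).1 ∨ (f u).2 = (f v).2

/-- `logStar n`: the least `j` such that the `j`-fold iterated base-2 logarithm of `n`
is at most `1`. -/
noncomputable def logStar (n : ℕ) : ℕ := sInf {j : ℕ | (Real.logb 2)^[j] (n : ℝ) ≤ 1}

/-- The counterclockwise angle, in `[0, 2π)`, by which the direction `d₀` must be rotated
to reach the direction `d`. -/
noncomputable def ccwAngle (d₀ d : ℝ × ℝ) : ℝ :=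
  if Complex.arg ((⟨d.1, d.2⟩ : ℂ) / (⟨d₀.1, d₀.2⟩ : ℂ)) < 0 then
    Complex.arg ((⟨d.1, d.2⟩ : ℂ) / (⟨d₀.1, d₀.2⟩ : ℂ)) + 2 * Real.pi
  else Complex.arg ((⟨d.1, d.2⟩ : ℂ) / (⟨d₀.1, d₀.2⟩ : ℂ))

/-- A drawing of an ordered binary tree (with left/right designation `lab`, `false` = left,
`true` = right) is order-preserving: around any vertex `v` with a parent `p`, a left child
`l`, and a right child `rc`, rotating counterclockwise from the direction of `f p - f v`,
the direction of `f l - f v` is encountered strictly before that of `f rc - f v`. -/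
def IsOrderPreserving {V : Type} (G : SimpleGraph V) (r : V) (lab : V → Bool)
    (f : V → ℝ × ℝ) : Prop :=
  ∀ p v l rc : V, IsParent G r p v →
    IsParent G r v l → lab l = false →
    IsParent G r v rc → lab rc = true →
    ccwAngle (f p - f v) (f l - f v) < ccwAngle (f p - f v) (f rc - f v)

namespace TreeDraw

/-! ### Binary trees, drawn trees and crossing-freeness -/

/-- A point of the plane. -/
abbrev Pt := ℝ × ℝ

/-- The shape of an ordered binary tree; `nil` is the empty tree. -/
inductive BT : Type
  | nil : BT
  | node (l r : BT) : BT

/-- A drawn ordered binary tree: every node carries its position. -/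
inductive DT : Type
  | nil : DT
  | node (p : Pt) (l r : DT) : DT

namespace BT

/-- Number of nodes. -/
def size : BT → ℕ
  | nil => 0
  | node l r => l.size + r.size + 1

/-- The mirror image: left and right are exchanged everywhere. -/
def mirror : BT → BT
  | nil => nil
  | node l r => node r.mirror l.mirror

@[simp] lemma size_mirror (T : BT) : T.mirror.size = T.size := by
  induction T with
  | nil => rfl
  | node l r hl hr => simp [mirror, size, hl, hr]; omega

@[simp] lemma mirror_mirror (T : BT) : T.mirror.mirror = T := by
  induction T with
  | nil => rfl
  | node l r hl hr => simp [mirror, hl, hr]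

end BT

/-- The cross product; it is positive iff `b` lies counterclockwise of `a` by less than `π`. -/
def cr (a b : Pt) : ℝ := a.1 * b.2 - a.2 * b.1

/-- The directions `a`, `b`, `c` occur in this strict counterclockwise cyclic order: at least two
of the three consecutive cross products are positive. -/
def Ccw (a b c : Pt) : Prop :=
  (0 < cr a b ∧ 0 < cr b c) ∨ (0 < cr b c ∧ 0 < cr c a) ∨ (0 < cr c a ∧ 0 < cr a b)

lemma Ccw.rot {a b c : Pt} (h : Ccw a b c) : Ccw b c a := by
  unfold Ccw at *; tauto

/-- Two directions in a closed half plane and one in the complementary open half plane are in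
cyclic order as soon as the first two are. -/
lemma ccw_half {a b c : Pt} (f g : ℝ) (hab : 0 < cr a b) (ha : 0 ≤ f * a.1 + g * a.2)
    (hb : 0 ≤ f * b.1 + g * b.2) (hc : f * c.1 + g * c.2 < 0) : Ccw c a b := by
  by_cases h1 : 0 < cr c a
  · exact Or.inl ⟨h1, hab⟩
  by_cases h2 : 0 < cr b c
  · exact Or.inr (Or.inl ⟨hab, h2⟩)
  exfalso
  push Not at h1 h2
  -- Cramer's identity `cr a b • c = cr c b • a + cr a c • b`, paired with the functional `(f, g)`
  have key : cr a b * (f * c.1 + g * c.2)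
      = -(cr b c) * (f * a.1 + g * a.2) + -(cr c a) * (f * b.1 + g * b.2) := by
    unfold cr; ring
  have h3 : cr a b * (f * c.1 + g * c.2) < 0 := mul_neg_of_pos_of_neg hab hc
  have h4 : 0 ≤ -(cr b c) * (f * a.1 + g * a.2) := mul_nonneg (by linarith) ha
  have h5 : 0 ≤ -(cr c a) * (f * b.1 + g * b.2) := mul_nonneg (by linarith) hb
  linarith

namespace DT

/-- Forget the positions. -/
def shape : DT → BT
  | nil => BT.nil
  | node _ l r => BT.node l.shape r.shape

/-- The set of positions of nodes. -/
def verts : DT → Set Pt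
  | nil => ∅
  | node p l r => {p} ∪ l.verts ∪ r.verts

/-- The position of the root, as a set with at most one element. -/
def rt : DT → Set Pt
  | nil => ∅
  | node p _ _ => {p}

/-- The points covered by the edges of a drawn tree whose root is joined to the point `q`. -/
def supp : Pt → DT → Set Pt
  | _, nil => ∅
  | q, node p l r => segment ℝ q p ∪ (supp p l ∪ supp p r)

/-- The points covered by the edges of a drawn tree. -/
def body : DT → Set Pt
  | nil => ∅
  | node p l r => supp p l ∪ supp p r

/-- The tree, with its root joined to `q`, is drawn without crossings: at every node the parent
edge and the two planted subtrees meet only in that node. -/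
def Good : Pt → DT → Prop
  | _, nil => True
  | q, node p l r => q ≠ p ∧ Good p l ∧ Good p r ∧
      (∀ x ∈ supp p l, x ∈ supp p r → x = p) ∧
      (∀ x ∈ segment ℝ q p, x ∈ supp p l → x = p) ∧
      (∀ x ∈ segment ℝ q p, x ∈ supp p r → x = p)

/-- The tree, with its root joined to `q`, is drawn in an order-preserving way. -/
def Ord : Pt → DT → Prop
  | _, nil => True
  | q, node p l r => (∀ a ∈ l.rt, ∀ b ∈ r.rt, Ccw (q - p) (a - p) (b - p)) ∧ Ord p l ∧ Ord p r

/-- A single node. -/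
def leaf (z : Pt) : DT := node z nil nil

/-- A node at `p` with subtrees `L` and `R`, where `b` tells whether `R` is the right child. -/
def nb (b : Bool) (p : Pt) (L R : DT) : DT := if b then node p L R else node p R L

@[simp] lemma rt_nb (b p L R) : (nb b p L R).rt = {p} := by cases b <;> rfl

@[simp] lemma verts_nb (b p L R) : (nb b p L R).verts = {p} ∪ L.verts ∪ R.verts := by
  cases b
  · simp only [nb, verts, Bool.false_eq_true, if_false]; ext; simp; tauto
  · rfl

@[simp] lemma body_nb (b p L R) : (nb b p L R).body = supp p L ∪ supp p R := by
  cases b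
  · simp only [nb, body, Bool.false_eq_true, if_false]; ext; simp; tauto
  · rfl

@[simp] lemma supp_nb (q b p L R) :
    (nb b p L R).supp q = segment ℝ q p ∪ (supp p L ∪ supp p R) := by
  cases b
  · simp only [nb, supp, Bool.false_eq_true, if_false]; ext; simp; tauto
  · rfl

lemma good_nb {q b p L R} : Good q (nb b p L R) ↔ q ≠ p ∧ Good p L ∧ Good p R ∧
      (∀ x ∈ supp p L, x ∈ supp p R → x = p) ∧
      (∀ x ∈ segment ℝ q p, x ∈ supp p L → x = p) ∧
      (∀ x ∈ segment ℝ q p, x ∈ supp p R → x = p) := by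
  cases b
  · simp only [nb, Good, Bool.false_eq_true, if_false]
    constructor
    · rintro ⟨h1, h2, h3, h4, h5, h6⟩; exact ⟨h1, h3, h2, fun x h h' => h4 x h' h, h6, h5⟩
    · rintro ⟨h1, h2, h3, h4, h5, h6⟩; exact ⟨h1, h3, h2, fun x h h' => h4 x h' h, h6, h5⟩
  · rfl

lemma ord_nb_true {q p L R} : Ord q (nb true p L R) ↔
    (∀ a ∈ L.rt, ∀ b ∈ R.rt, Ccw (q - p) (a - p) (b - p)) ∧ Ord p L ∧ Ord p R := by rfl

lemma ord_nb_false {q p L R} : Ord q (nb false p L R) ↔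
    (∀ a ∈ R.rt, ∀ b ∈ L.rt, Ccw (q - p) (a - p) (b - p)) ∧ Ord p R ∧ Ord p L := by rfl

lemma rt_sub_verts (D : DT) : D.rt ⊆ D.verts := by
  cases D <;> simp [rt, verts]

lemma supp_eq {q z : Pt} {D : DT} (h : z ∈ D.rt) : D.supp q = segment ℝ q z ∪ D.body := by
  cases D with
  | nil => simp [rt] at h
  | node p l r => simp only [rt, Set.mem_singleton_iff] at h; subst h; rfl

lemma supp_cases {q x : Pt} {D : DT} (h : x ∈ D.supp q) :
    (∃ z ∈ D.rt, x ∈ segment ℝ q z) ∨ x ∈ D.body := by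
  cases D with
  | nil => exact absurd h (by simp [supp])
  | node p l r =>
    rcases h with h | h
    · exact Or.inl ⟨p, rfl, h⟩
    · exact Or.inr h

lemma supp_sub_convex {K : Set Pt} (hK : Convex ℝ K) :
    ∀ (D : DT) (q : Pt), q ∈ K → D.verts ⊆ K → D.supp q ⊆ K
  | nil, _, _, _ => by simp [supp]
  | node p l r, q, hq, h => by
    have hp : p ∈ K := h (by simp [verts])
    refine Set.union_subset (hK.segment_subset hq hp) (Set.union_subset ?_ ?_)
    · exact supp_sub_convex hK l p hp (fun x hx => h (by simp [verts, hx]))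
    · exact supp_sub_convex hK r p hp (fun x hx => h (by simp [verts, hx]))

lemma body_sub_convex {K : Set Pt} (hK : Convex ℝ K) (D : DT) (h : D.verts ⊆ K) :
    D.body ⊆ K := by
  cases D with
  | nil => simp [body]
  | node p l r =>
    have hp : p ∈ K := h (by simp [verts])
    refine Set.union_subset ?_ ?_
    · exact supp_sub_convex hK l p hp (fun x hx => h (by simp [verts, hx]))
    · exact supp_sub_convex hK r p hp (fun x hx => h (by simp [verts, hx]))

/-- The root may be joined to another point `q` as long as the new edge avoids the tree. -/
lemma Good.replant {q q' : Pt} {D : DT} (h : Good q' D)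
    (hq : ∀ z ∈ D.rt, q ≠ z ∧ ∀ x ∈ segment ℝ q z, x ∈ D.body → x = z) : Good q D := by
  cases D with
  | nil => trivial
  | node p l r =>
    obtain ⟨_, h1, h2, h3, _, _⟩ := h
    obtain ⟨h4, h5⟩ := hq p rfl
    exact ⟨h4, h1, h2, h3, fun x hx hx' => h5 x hx (Or.inl hx'),
      fun x hx hx' => h5 x hx (Or.inr hx')⟩

end DT

lemma convex_le1 (a : ℝ) : Convex ℝ {x : Pt | x.1 ≤ a} :=
  convex_halfSpace_le (IsLinearMap.mk (fun _ _ => rfl) (fun _ _ => rfl)) a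
lemma convex_ge1 (a : ℝ) : Convex ℝ {x : Pt | a ≤ x.1} :=
  convex_halfSpace_ge (IsLinearMap.mk (fun _ _ => rfl) (fun _ _ => rfl)) a
lemma convex_le2 (a : ℝ) : Convex ℝ {x : Pt | x.2 ≤ a} :=
  convex_halfSpace_le (IsLinearMap.mk (fun _ _ => rfl) (fun _ _ => rfl)) a
lemma convex_ge2 (a : ℝ) : Convex ℝ {x : Pt | a ≤ x.2} :=
  convex_halfSpace_ge (IsLinearMap.mk (fun _ _ => rfl) (fun _ _ => rfl)) a
lemma convex_lt2 (a : ℝ) : Convex ℝ {x : Pt | x.2 < a} :=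
  convex_halfSpace_lt (IsLinearMap.mk (fun _ _ => rfl) (fun _ _ => rfl)) a

/-- Coordinates of the points of a segment. -/
lemma seg_param {p q x : Pt} (h : x ∈ segment ℝ p q) :
    ∃ t : ℝ, 0 ≤ t ∧ t ≤ 1 ∧ x.1 = p.1 + t * (q.1 - p.1) ∧ x.2 = p.2 + t * (q.2 - p.2) := by
  rw [segment_eq_image'] at h
  obtain ⟨t, ⟨h0, h1⟩, rfl⟩ := h
  exact ⟨t, h0, h1, by simp, by simp⟩

/-- Two non-collinear segments with a common endpoint meet only there. -/
lemma seg_inter {p a b x : Pt} (h : cr (a - p) (b - p) ≠ 0) (ha : x ∈ segment ℝ p a)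
    (hb : x ∈ segment ℝ p b) : x = p := by
  obtain ⟨t, _, _, h1, h2⟩ := seg_param ha
  obtain ⟨s, _, _, h3, h4⟩ := seg_param hb
  have e1 : t * (a.1 - p.1) = s * (b.1 - p.1) := by linarith
  have e2 : t * (a.2 - p.2) = s * (b.2 - p.2) := by linarith
  have : t * cr (a - p) (b - p) = 0 := by
    simp only [cr, Prod.fst_sub, Prod.snd_sub]
    linear_combination (b.2 - p.2) * e1 - (b.1 - p.1) * e2
  have ht : t = 0 := by
    rcases mul_eq_zero.mp this with h' | h'
    · exact h'
    · exact absurd h' h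
  subst ht
  ext <;> linarith

/-- A point of a segment at the level of the endpoint `q` is `q`. -/
lemma seg_end1 {p q x : Pt} (h : x ∈ segment ℝ p q) (hpq : p.1 ≠ q.1) (hx : x.1 = q.1) :
    x = q := by
  obtain ⟨t, _, _, h1, h2⟩ := seg_param h
  have : (t - 1) * (q.1 - p.1) = 0 := by linarith
  rcases mul_eq_zero.mp this with h' | h'
  · have : t = 1 := by linarith
    subst this
    ext <;> linarith
  · exact absurd (by linarith) hpq

lemma seg_end2 {p q x : Pt} (h : x ∈ segment ℝ p q) (hpq : p.2 ≠ q.2) (hx : x.2 = q.2) :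
    x = q := by
  obtain ⟨t, _, _, h1, h2⟩ := seg_param h
  have : (t - 1) * (q.2 - p.2) = 0 := by linarith
  rcases mul_eq_zero.mp this with h' | h'
  · have : t = 1 := by linarith
    subst this
    ext <;> linarith
  · exact absurd (by linarith) hpq

lemma seg_le1 {p q x : Pt} {a : ℝ} (h : x ∈ segment ℝ p q) (hp : p.1 ≤ a) (hq : q.1 ≤ a) :
    x.1 ≤ a := (convex_le1 a).segment_subset hp hq h
lemma seg_ge1 {p q x : Pt} {a : ℝ} (h : x ∈ segment ℝ p q) (hp : a ≤ p.1) (hq : a ≤ q.1) :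
    a ≤ x.1 := (convex_ge1 a).segment_subset hp hq h
lemma seg_le2 {p q x : Pt} {a : ℝ} (h : x ∈ segment ℝ p q) (hp : p.2 ≤ a) (hq : q.2 ≤ a) :
    x.2 ≤ a := (convex_le2 a).segment_subset hp hq h
lemma seg_ge2 {p q x : Pt} {a : ℝ} (h : x ∈ segment ℝ p q) (hp : a ≤ p.2) (hq : a ≤ q.2) :
    a ≤ x.2 := (convex_ge2 a).segment_subset hp hq h

/-! ### Spines -/

/-- A spine: the nodes of a downward path, each with the side `b` on which the path continues and
the light subtree on the other side. It is a tree with one missing subtree. -/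
abbrev Spine := List (Bool × BT)

/-- A drawn spine. -/
abbrev DC := List (Bool × Pt × DT)

/-- Fill the missing subtree of a spine. -/
def plugS : Spine → BT → BT
  | [], T => T
  | (b, L) :: s, T => if b then BT.node L (plugS s T) else BT.node (plugS s T) L

/-- Number of nodes of a spine. -/
def wt : Spine → ℕ
  | [] => 0
  | (_, L) :: s => L.size + 1 + wt s

/-- The mirror image of a spine. -/
def mirS (s : Spine) : Spine := s.map fun i => (!i.1, i.2.mirror)

namespace DC

/-- Fill the missing subtree of a drawn spine. -/
def plug : DC → DT → DT
  | [], D => D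
  | (b, p, L) :: c, D => DT.nb b p L (plug c D)

/-- Forget the positions. -/
def shape (c : DC) : Spine := c.map fun i => (i.1, i.2.2.shape)

/-- The set of positions of nodes. -/
def verts (c : DC) : Set Pt := (plug c DT.nil).verts

/-- The last node of the path, or `q` if the path is empty. -/
def last : Pt → DC → Pt
  | q, [] => q
  | _, (_, p, _) :: c => last p c

end DC

open DT

lemma shape_nb (b p L R) : (nb b p L R).shape =
    if b then BT.node L.shape R.shape else BT.node R.shape L.shape := by cases b <;> rfl

lemma shape_plug (c : DC) (D : DT) : (c.plug D).shape = plugS c.shape D.shape := by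
  induction c with
  | nil => rfl
  | cons i c ih =>
    obtain ⟨b, p, L⟩ := i
    simp only [DC.plug, shape_nb, ih, DC.shape, List.map_cons, plugS]

lemma verts_plug (c : DC) (D : DT) : (c.plug D).verts = c.verts ∪ D.verts := by
  induction c with
  | nil => simp [DC.plug, DC.verts, DT.verts]
  | cons i c ih =>
    obtain ⟨b, p, L⟩ := i
    simp only [DC.plug, DC.verts, verts_nb] at *
    rw [ih]; simp only [Set.union_assoc]

lemma verts_cons (b p L) (c : DC) : DC.verts ((b, p, L) :: c) = {p} ∪ L.verts ∪ c.verts := by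
  simp [DC.verts, DC.plug]

lemma rt_plug {c : DC} {D D' : DT} (h : D.rt = D'.rt) : (c.plug D).rt = (c.plug D').rt := by
  cases c with
  | nil => exact h
  | cons i c => simp [DC.plug]

lemma rt_leaf (z : Pt) : (leaf z).rt = {z} := rfl

lemma rt_eq {D : DT} {z : Pt} (h : z ∈ D.rt) : D.rt = (leaf z).rt := by
  cases D with
  | nil => simp [rt] at h
  | node p l r => simp only [rt, Set.mem_singleton_iff] at h; subst h; rfl

lemma supp_plug {c : DC} {D : DT} {z : Pt} (h : z ∈ D.rt) :
    ∀ q, (c.plug D).supp q = (c.plug (leaf z)).supp q ∪ D.body := by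
  induction c with
  | nil => intro q; rw [DC.plug, DC.plug, supp_eq h]; simp [leaf, supp]
  | cons i c ih =>
    obtain ⟨b, p, L⟩ := i
    intro q
    simp only [DC.plug, supp_nb, ih, Set.union_assoc]

lemma supp_plug_nil_sub {c : DC} {D : DT} : ∀ q, (c.plug DT.nil).supp q ⊆ (c.plug D).supp q := by
  induction c with
  | nil => intro q; simp [DC.plug, supp]
  | cons i c ih =>
    obtain ⟨b, p, L⟩ := i
    intro q
    simp only [DC.plug, supp_nb]
    exact Set.union_subset_union_right _ (Set.union_subset_union_right _ (ih p))

/-- Filling the missing subtree with a tree whose root is `z` and whose edges avoid those of the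
spine. -/
lemma good_plug {D : DT} {z : Pt} (hz : z ∈ D.rt) : ∀ {c : DC} {q : Pt},
    Good q (c.plug (leaf z)) → Good (c.last q) D →
    (∀ x ∈ (c.plug DT.nil).supp q, x ∉ D.body) → Good q (c.plug D)
  | [], q, _, h, _ => h
  | (b, p, L) :: c, q, h1, h2, h3 => by
    simp only [DC.plug, good_nb] at h1 ⊢
    obtain ⟨a1, a2, a3, a4, a5, a6⟩ := h1
    simp only [DC.plug, supp_nb] at h3
    refine ⟨a1, a2, good_plug hz a3 h2 fun x hx => h3 x (Or.inr (Or.inr hx)), ?_, a5, ?_⟩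
    · intro x hx hx'
      rw [supp_plug hz] at hx'
      rcases hx' with hx' | hx'
      · exact a4 x hx hx'
      · exact absurd hx' (h3 x (Or.inr (Or.inl hx)))
    · intro x hx hx'
      rw [supp_plug hz] at hx'
      rcases hx' with hx' | hx'
      · exact a6 x hx hx'
      · exact absurd hx' (h3 x (Or.inl hx))

/-- The analogue of `good_plug` for order preservation: above the filled-in tree, only the position
of its root matters. -/
lemma ord_plug {D : DT} {z : Pt} (hz : z ∈ D.rt) : ∀ {c : DC} {q : Pt},
    Ord q (c.plug (leaf z)) → Ord (c.last q) D → Ord q (c.plug D)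
  | [], q, _, h => h
  | (true, p, L) :: c, q, h1, h2 => by
    simp only [DC.plug, ord_nb_true] at h1 ⊢
    rw [rt_plug (rt_eq hz)]
    exact ⟨h1.1, h1.2.1, ord_plug hz h1.2.2 h2⟩
  | (false, p, L) :: c, q, h1, h2 => by
    simp only [DC.plug, ord_nb_false] at h1 ⊢
    rw [rt_plug (rt_eq hz)]
    exact ⟨h1.1, ord_plug hz h1.2.1 h2, h1.2.2⟩

end TreeDraw

namespace TreeDraw
open DT

/-! ### Affine images of drawings -/

/-- An affine map of the plane, `(x, y) ↦ (a x + b y + u, c x + d y + v)`. -/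
structure Aff where
  (a b c d u v : ℝ)

namespace Aff

/-- The image of a point. -/
def ap (g : Aff) (p : Pt) : Pt := (g.a * p.1 + g.b * p.2 + g.u, g.c * p.1 + g.d * p.2 + g.v)

/-- The map has determinant `-1` or `1`, according to whether it reverses the orientation. -/
def Det (g : Aff) (s : Bool) : Prop := g.a * g.d - g.b * g.c = if s then -1 else 1

lemma Det.inj {g : Aff} {s : Bool} (h : g.Det s) : Function.Injective g.ap := by
  intro p q hpq
  have h1 := congrArg Prod.fst hpq
  have h2 := congrArg Prod.snd hpq
  simp only [ap] at h1 h2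
  have e1 : (g.a * g.d - g.b * g.c) * (p.1 - q.1) = 0 := by
    linear_combination g.d * h1 - g.b * h2
  have e2 : (g.a * g.d - g.b * g.c) * (p.2 - q.2) = 0 := by
    linear_combination g.a * h2 - g.c * h1
  unfold Det at h
  rw [h] at e1 e2
  cases s <;> simp at e1 e2 <;> ext <;> linarith

lemma seg (g : Aff) (p q : Pt) : segment ℝ (g.ap p) (g.ap q) = g.ap '' segment ℝ p q := by
  ext x
  simp only [segment_eq_image', Set.mem_image, exists_exists_and_eq_and]
  constructor
  · rintro ⟨t, ht, rfl⟩
    refine ⟨t, ht, ?_⟩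
    ext <;> simp [ap] <;> ring
  · rintro ⟨t, ht, rfl⟩
    refine ⟨t, ht, ?_⟩
    ext <;> simp [ap] <;> ring

lemma cr_ap (g : Aff) {s : Bool} (h : g.Det s) (p x y : Pt) :
    cr (g.ap x - g.ap p) (g.ap y - g.ap p) = (if s then -1 else 1) * cr (x - p) (y - p) := by
  rw [← h]; simp only [cr, ap, Prod.fst_sub, Prod.snd_sub]; ring

end Aff

namespace DT

/-- Apply an affine map to a drawing, exchanging left and right if `s` is set. -/
def tr (s : Bool) (g : Aff) : DT → DT
  | nil => nil
  | node p l r => if s then node (g.ap p) (tr s g r) (tr s g l)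
      else node (g.ap p) (tr s g l) (tr s g r)

variable {s : Bool} {g : Aff}

lemma tr_nb (b p L R) : tr s g (nb b p L R) = nb (xor b s) (g.ap p) (tr s g L) (tr s g R) := by
  cases b <;> cases s <;> rfl

lemma tr_leaf (z : Pt) : tr s g (leaf z) = leaf (g.ap z) := by
  cases s <;> rfl

lemma shape_tr_false (D : DT) : (tr false g D).shape = D.shape := by
  induction D with
  | nil => rfl
  | node p l r hl hr => simp [tr, shape, hl, hr]

lemma shape_tr_true (D : DT) : (tr true g D).shape = D.shape.mirror := by
  induction D with
  | nil => rfl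
  | node p l r hl hr => simp [tr, shape, hl, hr, BT.mirror]

lemma verts_tr (D : DT) : (tr s g D).verts = g.ap '' D.verts := by
  induction D with
  | nil => simp [tr, verts]
  | node p l r hl hr =>
    cases s <;> simp only [tr, verts, hl, hr, Set.image_union, Set.image_singleton, if_true,
      Bool.false_eq_true, if_false]
    rw [Set.union_assoc, Set.union_assoc, Set.union_comm (g.ap '' r.verts)]

lemma rt_tr (D : DT) : (tr s g D).rt = g.ap '' D.rt := by
  cases D with
  | nil => simp [tr, rt]
  | node p l r => cases s <;> simp [tr, rt]

lemma supp_tr (D : DT) : ∀ q, (tr s g D).supp (g.ap q) = g.ap '' D.supp q := by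
  induction D with
  | nil => intro q; simp [tr, supp]
  | node p l r hl hr =>
    intro q
    cases s <;> simp only [tr, supp, hl, hr, Set.image_union, Aff.seg, if_true,
      Bool.false_eq_true, if_false]
    rw [Set.union_comm (g.ap '' r.supp p)]

lemma good_tr (h : g.Det s) : ∀ (D : DT) (q : Pt), Good q D → Good (g.ap q) (tr s g D)
  | nil, _, _ => trivial
  | node p l r, q, ⟨h1, h2, h3, h4, h5, h6⟩ => by
    have e : tr s g (node p l r) = nb (xor true s) (g.ap p) (tr s g l) (tr s g r) := tr_nb true p l r
    rw [e, good_nb]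
    refine ⟨fun e => h1 (h.inj e), good_tr h l p h2, good_tr h r p h3, ?_, ?_, ?_⟩
    · rw [supp_tr, supp_tr]
      rintro _ ⟨x, hx, rfl⟩ ⟨y, hy, e⟩
      rw [h.inj e] at hy
      rw [h4 x hx hy]
    · rw [supp_tr, Aff.seg]
      rintro _ ⟨x, hx, rfl⟩ ⟨y, hy, e⟩
      rw [h.inj e] at hy
      rw [h5 x hx hy]
    · rw [supp_tr, Aff.seg]
      rintro _ ⟨x, hx, rfl⟩ ⟨y, hy, e⟩
      rw [h.inj e] at hy
      rw [h6 x hx hy]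

lemma ord_tr (h : g.Det s) : ∀ (D : DT) (q : Pt), Ord q D → Ord (g.ap q) (tr s g D)
  | nil, _, _ => trivial
  | node p l r, q, ⟨h1, h2, h3⟩ => by
    have i2 := ord_tr h l p h2
    have i3 := ord_tr h r p h3
    cases s
    · refine ⟨?_, i2, i3⟩
      rw [rt_tr, rt_tr]
      rintro _ ⟨a, ha, rfl⟩ _ ⟨b, hb, rfl⟩
      have := h1 a ha b hb
      simpa [Ccw, g.cr_ap h] using this
    · refine ⟨?_, i3, i2⟩
      rw [rt_tr, rt_tr]
      rintro _ ⟨a, ha, rfl⟩ _ ⟨b, hb, rfl⟩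
      have := h1 b hb a ha
      have ec : ∀ x y : Pt, -cr x y = cr y x := by intro x y; unfold cr; ring
      simp only [Ccw, g.cr_ap h, if_true, neg_mul, one_mul, ec] at this ⊢
      tauto

end DT

namespace DC

/-- Apply an affine map to a drawn spine, exchanging left and right if `s` is set. -/
def tr (s : Bool) (g : Aff) (c : DC) : DC := c.map fun i => (xor i.1 s, g.ap i.2.1, i.2.2.tr s g)

variable {s : Bool} {g : Aff}

lemma tr_plug (c : DC) (D : DT) : (c.plug D).tr s g = (c.tr s g).plug (D.tr s g) := by
  induction c with
  | nil => rfl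
  | cons i c ih =>
    obtain ⟨b, p, L⟩ := i
    simp only [plug, tr_nb, ih, tr, List.map_cons]

lemma verts_tr (c : DC) : (c.tr s g).verts = g.ap '' c.verts := by
  have : (c.tr s g).verts = ((c.plug DT.nil).tr s g).verts := by rw [tr_plug]; rfl
  rw [this, DT.verts_tr]; rfl

lemma last_tr : ∀ (c : DC) (q : Pt), (c.tr s g).last (g.ap q) = g.ap (c.last q)
  | [], _ => rfl
  | (_, p, _) :: c, _ => last_tr c p

lemma shape_tr_false (c : DC) : (c.tr false g).shape = c.shape := by
  simp [tr, shape, DT.shape_tr_false]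

lemma shape_tr_true (c : DC) : (c.tr true g).shape = mirS c.shape := by
  simp [tr, shape, DT.shape_tr_true, mirS]

end DC

@[simp] lemma mirS_mirS (s : Spine) : mirS (mirS s) = s := by
  induction s with
  | nil => rfl
  | cons i s ih => simp only [mirS, List.map_cons] at *; simp [ih]

@[simp] lemma wt_mirS (s : Spine) : wt (mirS s) = wt s := by
  induction s with
  | nil => rfl
  | cons i s ih => obtain ⟨b, L⟩ := i; simp only [mirS, List.map_cons, wt] at *; simp [ih]

@[simp] lemma length_mirS (s : Spine) : (mirS s).length = s.length := by simp [mirS]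

end TreeDraw

namespace TreeDraw
open DT

/-! ### Local geometry of the strip -/

/-- A segment leaving an open half plane's boundary stays inside the half plane. -/
lemma seg_half (α β : ℝ) {v p x : Pt} (h : α * v.1 + β * v.2 < α * p.1 + β * p.2)
    (hx : x ∈ segment ℝ v p) : x = v ∨ α * v.1 + β * v.2 < α * x.1 + β * x.2 := by
  obtain ⟨t, t0, _, h1, h2⟩ := seg_param hx
  rcases t0.eq_or_lt with rfl | t0
  · left; ext <;> linarith
  · right; rw [h1, h2]; nlinarith

lemma convex_half (α β a : ℝ) : Convex ℝ {x : Pt | a < α * x.1 + β * x.2} := by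
  refine convex_halfSpace_gt (f := fun x : Pt => α * x.1 + β * x.2) ⟨?_, ?_⟩ a
  · intro x y; simp; ring
  · intro c x; simp; ring

lemma convex_gt2 (a : ℝ) : Convex ℝ {x : Pt | a < x.2} := by simpa using convex_half 0 1 a

/-- A tree inside an open half plane, joined to a boundary point, meets the boundary only there. -/
lemma supp_half (α β : ℝ) {v x : Pt} {D : DT}
    (h : ∀ p ∈ D.verts, α * v.1 + β * v.2 < α * p.1 + β * p.2)
    (hx : x ∈ D.supp v) : x = v ∨ α * v.1 + β * v.2 < α * x.1 + β * x.2 := by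
  rcases supp_cases hx with ⟨z, hz, hx⟩ | hx
  · exact seg_half α β (h z (rt_sub_verts D hz)) hx
  · right
    exact body_sub_convex (convex_half α β _) D h hx

lemma supp_above {v x : Pt} {D : DT} (h : ∀ p ∈ D.verts, v.2 < p.2) (hx : x ∈ D.supp v) :
    x = v ∨ v.2 < x.2 := by
  simpa using supp_half 0 1 (by simpa using h) hx

lemma supp_below {v x : Pt} {D : DT} (h : ∀ p ∈ D.verts, p.2 < v.2) (hx : x ∈ D.supp v) :
    x = v ∨ x.2 < v.2 := by
  simpa using supp_half 0 (-1) (by simpa using h) hx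

lemma supp_right {v x : Pt} {D : DT} (h : ∀ p ∈ D.verts, v.1 < p.1) (hx : x ∈ D.supp v) :
    x = v ∨ v.1 < x.1 := by
  simpa using supp_half 1 0 (by simpa using h) hx

lemma supp_left {v x : Pt} {D : DT} (h : ∀ p ∈ D.verts, p.1 < v.1) (hx : x ∈ D.supp v) :
    x = v ∨ x.1 < v.1 := by
  simpa using supp_half (-1) 0 (by simpa using h) hx

/-- A tree that can be joined to every point of the closed strip `0 ≤ x ≤ 1` above the level
`hi`; its root lies on the line `x = 0`. -/
def IntL (hi : ℝ) (R : DT) : Prop :=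
  (∀ p ∈ R.rt, p.1 = 0) ∧ (∀ p ∈ R.verts, p.2 ≤ hi) ∧
    ∀ q : Pt, 0 ≤ q.1 → q.1 ≤ 1 → hi < q.2 → Good q R ∧ Ord q R

/-- A light subtree occupying the rows `a₁..a₂` and the columns `1..X`, with its root in column
`1`. -/
structure LLight (X a₁ a₂ : ℝ) (D : DT) : Prop where
  ge1 : ∀ p ∈ D.verts, 1 ≤ p.1
  le1 : ∀ p ∈ D.verts, p.1 ≤ X
  ge2 : ∀ p ∈ D.verts, a₁ ≤ p.2
  le2 : ∀ p ∈ D.verts, p.2 ≤ a₂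
  root : ∀ p ∈ D.rt, p.1 = 1
  good : ∀ q : Pt, q.1 < 1 → Good q D
  ord : ∀ q : Pt, q.1 < 1 → Ord q D

/-- The same with the root in column `X`. -/
structure RLight (X a₁ a₂ : ℝ) (D : DT) : Prop where
  ge1 : ∀ p ∈ D.verts, 1 ≤ p.1
  le1 : ∀ p ∈ D.verts, p.1 ≤ X
  ge2 : ∀ p ∈ D.verts, a₁ ≤ p.2
  le2 : ∀ p ∈ D.verts, p.2 ≤ a₂
  root : ∀ p ∈ D.rt, p.1 = X
  good : ∀ q : Pt, X < q.1 → Good q D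
  ord : ∀ q : Pt, X < q.1 → Ord q D

lemma LLight.supp {X a₁ a₂ : ℝ} {D : DT} (h : LLight X a₁ a₂ D) {v x : Pt} (hv : v.1 = 0)
    (hx : x ∈ D.supp v) : x.1 < 1 ∨ (1 ≤ x.1 ∧ a₁ ≤ x.2 ∧ x.2 ≤ a₂) := by
  rcases supp_cases hx with ⟨z, hz, hx⟩ | hx
  · have e := h.root z hz
    rcases (seg_le1 hx (by linarith : v.1 ≤ 1) e.le).lt_or_eq with h1 | h1
    · exact Or.inl h1
    · have := seg_end1 hx (by rw [hv, e]; norm_num) (h1.trans e.symm)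
      subst this
      exact Or.inr ⟨h1.ge, h.ge2 _ (rt_sub_verts _ hz), h.le2 _ (rt_sub_verts _ hz)⟩
  · exact Or.inr ⟨body_sub_convex (convex_ge1 _) D h.ge1 hx,
      body_sub_convex (convex_ge2 _) D h.ge2 hx, body_sub_convex (convex_le2 _) D h.le2 hx⟩

lemma RLight.supp {X a₁ a₂ : ℝ} {D : DT} (h : RLight X a₁ a₂ D) {v x : Pt} (hv : v.1 = X + 1)
    (hx : x ∈ D.supp v) : X < x.1 ∨ (x.1 ≤ X ∧ a₁ ≤ x.2 ∧ x.2 ≤ a₂) := by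
  rcases supp_cases hx with ⟨z, hz, hx⟩ | hx
  · have e := h.root z hz
    rcases (seg_ge1 hx (by linarith : X ≤ v.1) e.ge).lt_or_eq with h1 | h1
    · exact Or.inl h1
    · have := seg_end1 hx (by rw [hv, e]; norm_num) (h1.symm.trans e.symm)
      subst this
      exact Or.inr ⟨h1.ge, h.ge2 _ (rt_sub_verts _ hz), h.le2 _ (rt_sub_verts _ hz)⟩
  · exact Or.inr ⟨body_sub_convex (convex_le1 _) D h.le1 hx,
      body_sub_convex (convex_ge2 _) D h.ge2 hx, body_sub_convex (convex_le2 _) D h.le2 hx⟩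

/-- The edge from `v` to a point of the strip high above avoids a light subtree lying above `v`. -/
lemma seg_light {hi y₀ : ℝ} {v q x : Pt} {D : DT} (hv : v = (0, y₀)) (hy : y₀ ≤ hi)
    (ge1 : ∀ p ∈ D.verts, 1 ≤ p.1) (le2 : ∀ p ∈ D.verts, p.2 ≤ hi) (root : ∀ p ∈ D.rt, p.1 = 1)
    (hq0 : 0 ≤ q.1) (hq1 : q.1 ≤ 1) (hq : hi < q.2)
    (hx : x ∈ segment ℝ q v) (hx' : x ∈ D.supp v) : x = v := by
  subst hv
  rcases supp_cases hx' with ⟨z, hz, h⟩ | h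
  · have e := root z hz
    have l := le2 z (rt_sub_verts _ hz)
    rw [segment_symm] at hx
    refine seg_inter (ne_of_gt ?_) h hx
    simp only [cr, Prod.fst_sub, Prod.snd_sub, e]
    nlinarith
  · have h1 := body_sub_convex (convex_ge1 _) D ge1 h
    have h2 := body_sub_convex (convex_le2 _) D le2 h
    simp only [Set.mem_ofPred_eq] at h1 h2
    obtain ⟨t, t0, t1, e1, e2⟩ := seg_param hx
    simp only at e1 e2
    exfalso
    -- the abscissa `(1 - t) q.1` is at least `1`, so `t = 0` and the point is `q`
    have : t = 0 := by nlinarith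
    subst this
    linarith

/-- Two consecutive path nodes `v`, `w` at the same level on the two sides of the strip, with the
light subtrees between them and the rest of the tree below. -/
lemma pair {X hi y₀ a₁ a₂ b₁ b₂ ρ : ℝ} (hX : 1 ≤ X) {bv bw : Bool} {D₁ D₂ R : DT} {v w : Pt}
    (hv : v = (0, y₀)) (hw : w = (X + 1, y₀)) (hy : y₀ ≤ hi)
    (h₁ : LLight X a₁ a₂ D₁) (h₂ : RLight X b₁ b₂ D₂)
    (hv₁ : bv = true → a₂ < y₀) (hv₂ : bv = false → y₀ < a₁)
    (hw₁ : bw = true → b₂ < y₀) (hw₂ : bw = false → y₀ < b₁)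
    (ha : a₂ ≤ hi) (hb : b₂ ≤ hi) (hab : a₂ < b₁ ∨ b₂ < a₁)
    (hρa : ρ < a₁) (hρb : ρ < b₁) (hρ : ρ < y₀)
    (hR : ∀ p ∈ R.verts, p.2 ≤ ρ) (hRr : ∀ p ∈ R.rt, p.1 = X ∨ p.1 = X + 1)
    (hRg : Good w R) (hRo : Ord w R) :
    IntL hi (nb bv v D₁ (nb bw w D₂ R)) := by
  have v1 : v.1 = 0 := by rw [hv]
  have v2 : v.2 = y₀ := by rw [hv]
  have w1 : w.1 = X + 1 := by rw [hw]
  have w2 : w.2 = y₀ := by rw [hw]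
  have vw : v ≠ w := fun e => by rw [e, w1] at v1; linarith
  -- position of the light subtrees relative to the common level
  have l1 : ∀ x ∈ D₁.supp v, x = v ∨ x.2 ≠ y₀ := by
    intro x hx
    cases bv
    · rcases supp_above (fun p hp => by linarith [hv₂ rfl, h₁.ge2 p hp]) hx with h | h
      · exact Or.inl h
      · right; linarith [h.ne']
    · rcases supp_below (fun p hp => by linarith [hv₁ rfl, h₁.le2 p hp]) hx with h | h
      · exact Or.inl h
      · right; rw [v2] at h; exact h.ne
  have l2 : ∀ x ∈ D₂.supp w, x = w ∨ x.2 ≠ y₀ := by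
    intro x hx
    cases bw
    · rcases supp_above (fun p hp => by linarith [hw₂ rfl, h₂.ge2 p hp]) hx with h | h
      · exact Or.inl h
      · right; rw [w2] at h; exact h.ne'
    · rcases supp_below (fun p hp => by linarith [hw₁ rfl, h₂.le2 p hp]) hx with h | h
      · exact Or.inl h
      · right; rw [w2] at h; exact h.ne
  have l3 : ∀ x ∈ R.supp w, x = w ∨ x.2 < y₀ := by
    intro x hx
    have := supp_below (fun p hp => by linarith [hR p hp]) hx
    rwa [w2] at this
  have lvw : ∀ x ∈ segment ℝ v w, x.2 = y₀ := fun x hx =>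
    le_antisymm (seg_le2 hx v2.le w2.le) (seg_ge2 hx v2.ge w2.ge)
  have hseg : ∀ x z, z ∈ R.rt → x ∈ segment ℝ w z → X ≤ x.1 ∧ (x.1 = X → x.2 ≤ ρ) := by
    intro x z hz hx
    rcases hRr z hz with e | e
    · refine ⟨seg_ge1 hx (by linarith) e.ge, fun hx1 => ?_⟩
      rw [seg_end1 hx (by rw [w1, e]; linarith) (hx1.trans e.symm)]
      exact hR z (rt_sub_verts _ hz)
    · have := seg_ge1 hx w1.ge e.ge
      exact ⟨by linarith, fun h => by linarith⟩
  have s1 : ∀ x ∈ D₁.supp v, x.1 ≤ X ∧ ρ < x.2 ∧ x.2 ≤ hi := fun x hx =>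
    ⟨supp_sub_convex (convex_le1 X) D₁ v (by simp [v1]; linarith) h₁.le1 hx,
      supp_sub_convex (convex_gt2 ρ) D₁ v (by simpa [v2])
        (fun p hp => hρa.trans_le (h₁.ge2 p hp)) hx,
      supp_sub_convex (convex_le2 hi) D₁ v (by simpa [v2])
        (fun p hp => (h₁.le2 p hp).trans ha) hx⟩
  have s2 : ∀ x ∈ D₂.supp w, 1 ≤ x.1 ∧ ρ < x.2 ∧ x.2 ≤ hi := fun x hx =>
    ⟨supp_sub_convex (convex_ge1 1) D₂ w (by simp [w1]; linarith) h₂.ge1 hx,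
      supp_sub_convex (convex_gt2 ρ) D₂ w (by simpa [w2])
        (fun p hp => hρb.trans_le (h₂.ge2 p hp)) hx,
      supp_sub_convex (convex_le2 hi) D₂ w (by simpa [w2])
        (fun p hp => (h₂.le2 p hp).trans hb) hx⟩
  refine ⟨by simp [v1], ?_, fun q hq0 hq1 hq => ⟨?_, ?_⟩⟩
  · intro p hp
    simp only [verts_nb, Set.mem_union, Set.mem_singleton_iff] at hp
    rcases hp with (rfl | hp) | (rfl | hp) | hp
    · linarith
    · linarith [h₁.le2 p hp]
    · linarith
    · linarith [h₂.le2 p hp]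
    · linarith [hR p hp]
  · simp only [good_nb, supp_nb]
    refine ⟨fun e => by rw [e] at hq; linarith, h₁.good v (by linarith), ⟨vw,
      h₂.good w (by linarith), hRg, ?_, ?_, ?_⟩, ?_, ?_, ?_⟩
    · -- the light subtree of `w` and the rest
      intro x hx hx'
      rcases supp_cases hx' with ⟨z, hz, hz'⟩ | hb'
      · rcases supp_cases hx with ⟨r, hr, hr'⟩ | hb''
        · rcases hRr z hz with e | e
          · refine seg_inter (ne_of_gt ?_) hr' hz'
            simp only [cr, Prod.fst_sub, Prod.snd_sub, h₂.root r hr, e, w1]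
            linarith [h₂.ge2 r (rt_sub_verts _ hr), hR z (rt_sub_verts _ hz)]
          · rcases supp_left (fun p hp => by linarith [h₂.le1 p hp]) hx with h | h
            · exact h
            · linarith [seg_ge1 hz' w1.ge e.ge]
        · have i1 : x.1 ≤ X := body_sub_convex (convex_le1 _) D₂ h₂.le1 hb''
          have i2 := hseg x z hz hz'
          exact absurd (i2.2 (le_antisymm i1 i2.1)) (by linarith [(s2 x hx).2.1])
      · have : x.2 ≤ ρ := body_sub_convex (convex_le2 ρ) R hR hb'
        linarith [(s2 x hx).2.1]
    · intro x hx hx'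
      rcases l2 x hx' with h | h
      · exact h
      · exact absurd (lvw x hx) h
    · intro x hx hx'
      rcases l3 x hx' with h | h
      · exact h
      · exact absurd (lvw x hx) h.ne
    · -- the light subtree of `v` and everything else
      rintro x hx (hx' | hx' | hx')
      · rcases l1 x hx with h | h
        · exact h
        · exact absurd (lvw x hx') h
      · exfalso
        rcases h₁.supp v1 hx with i | i <;> rcases h₂.supp w1 hx' with j | j
        · linarith
        · linarith [(s2 x hx').1]
        · linarith [(s1 x hx).1]
        · rcases hab with k | k <;> linarith
      · exfalso
        have i := s1 x hx
        rcases supp_cases hx' with ⟨z, hz, hz'⟩ | hb'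
        · have j := hseg x z hz hz'
          exact absurd (j.2 (le_antisymm i.1 j.1)) (by linarith)
        · have : x.2 ≤ ρ := body_sub_convex (convex_le2 ρ) R hR hb'
          linarith
    · intro x hx hx'
      cases bv
      · exact seg_light hv hy h₁.ge1 (fun p hp => (h₁.le2 p hp).trans ha) h₁.root hq0 hq1 hq hx hx'
      · rcases supp_below (fun p hp => by linarith [hv₁ rfl, h₁.le2 p hp]) hx' with h | h
        · exact h
        · linarith [seg_ge2 hx (by linarith : y₀ ≤ q.2) v2.ge]
    · have hqv : ∀ x ∈ segment ℝ q v, x.2 = y₀ → x = v := fun x hx h =>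
        seg_end2 hx (by linarith) (by rw [h, v2])
      rintro x hx (hx' | hx' | hx')
      · exact hqv x hx (lvw x hx')
      · exfalso
        have i := s2 x hx'
        obtain ⟨t, t0, t1, e1, e2⟩ := seg_param hx
        rw [v1] at e1; rw [v2] at e2
        have : t = 0 := by nlinarith
        subst this
        linarith
      · rcases l3 x hx' with h | h
        · exact hqv x hx (by rw [h, w2])
        · linarith [seg_ge2 hx (by linarith : y₀ ≤ q.2) v2.ge]
  · have hw' : Ord v (nb bw w D₂ R) := by
      cases bw
      · refine ord_nb_false.2 ⟨fun a ha' b hb' => Or.inr (Or.inr ?_), hRo, h₂.ord w (by linarith)⟩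
        have := h₂.root b hb'
        have := h₂.ge2 b (rt_sub_verts _ hb')
        have := hR a (rt_sub_verts _ ha')
        have := hw₂ rfl
        simp only [cr, Prod.fst_sub, Prod.snd_sub, *]
        constructor <;> nlinarith
      · refine ord_nb_true.2 ⟨fun a ha' b hb' => Or.inl ?_, h₂.ord w (by linarith), hRo⟩
        have e := h₂.root a ha'
        have := h₂.le2 a (rt_sub_verts _ ha')
        have := h₂.ge2 a (rt_sub_verts _ ha')
        have := hR b (rt_sub_verts _ hb')
        have := hw₁ rfl
        simp only [cr, Prod.fst_sub, Prod.snd_sub, v1, v2, w1, w2, e]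
        constructor
        · nlinarith
        · rcases hRr b hb' with e' | e' <;> rw [e'] <;> linarith
    cases bv
    · refine ord_nb_false.2 ⟨fun a ha' b hb' => Or.inr (Or.inl ?_), hw', h₁.ord v (by linarith)⟩
      simp only [rt_nb, Set.mem_singleton_iff] at ha'
      subst ha'
      have e := h₁.root b hb'
      have := h₁.le2 b (rt_sub_verts _ hb')
      have := h₁.ge2 b (rt_sub_verts _ hb')
      have := hv₂ rfl
      simp only [cr, Prod.fst_sub, Prod.snd_sub, v1, v2, w1, w2, e]
      constructor <;> nlinarith
    · refine ord_nb_true.2 ⟨fun a ha' b hb' => Or.inr (Or.inl ?_), h₁.ord v (by linarith), hw'⟩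
      simp only [rt_nb, Set.mem_singleton_iff] at hb'
      subst hb'
      have e := h₁.root a ha'
      have := h₁.le2 a (rt_sub_verts _ ha')
      have := hv₁ rfl
      simp only [cr, Prod.fst_sub, Prod.snd_sub, v1, v2, w1, w2, e]
      constructor <;> nlinarith

/-- A single path node with its light subtree above it, to the right, and the rest below. -/
lemma soloR {hi y₀ : ℝ} {b : Bool} {D R : DT} {v : Pt} (hv : v = (0, y₀)) (hy : y₀ ≤ hi)
    (ge1 : ∀ p ∈ D.verts, 1 ≤ p.1) (gt2 : ∀ p ∈ D.verts, y₀ < p.2) (le2 : ∀ p ∈ D.verts, p.2 ≤ hi)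
    (root : ∀ p ∈ D.rt, p.1 = 1) (good : Good v D) (ord : Ord v D)
    (hR : ∀ p ∈ R.verts, p.2 < y₀) (hRg : Good v R) (hRo : Ord v R)
    (hb : b = false ∨ R.rt = ∅) : IntL hi (nb b v D R) := by
  have v1 : v.1 = 0 := by rw [hv]
  have v2 : v.2 = y₀ := by rw [hv]
  refine ⟨by simp [v1], ?_, fun q hq0 hq1 hq => ⟨?_, ?_⟩⟩
  · intro p hp
    simp only [verts_nb, Set.mem_union, Set.mem_singleton_iff] at hp
    rcases hp with (rfl | hp) | hp
    · linarith
    · exact le2 p hp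
    · linarith [hR p hp]
  · rw [good_nb]
    refine ⟨fun e => by rw [e] at hq; linarith, good, hRg, ?_, fun x hx hx' =>
      seg_light hv hy ge1 le2 root hq0 hq1 hq hx hx', ?_⟩
    · intro x hx hx'
      rcases supp_above (fun p hp => by rw [v2]; exact gt2 p hp) hx with h | h
      · exact h
      rcases supp_below (fun p hp => by rw [v2]; exact hR p hp) hx' with h' | h'
      · exact h'
      · linarith
    · intro x hx hx'
      rcases supp_below (fun p hp => by rw [v2]; exact hR p hp) hx' with h' | h'
      · exact h'
      · linarith [seg_ge2 hx (by linarith : y₀ ≤ q.2) v2.ge]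
  · have key : b = false → ∀ z ∈ R.rt, ∀ r ∈ D.rt, Ccw (q - v) (z - v) (r - v) := by
      intro _ z hz r hr
      have e := root r hr
      have := gt2 r (rt_sub_verts _ hr)
      have := le2 r (rt_sub_verts _ hr)
      have := hR z (rt_sub_verts _ hz)
      refine (ccw_half 0 1 (a := r - v) (b := q - v) (c := z - v) ?_ ?_ ?_ ?_).rot.rot
      all_goals simp only [cr, Prod.fst_sub, Prod.snd_sub, v1, v2, e]
      all_goals nlinarith
    cases b
    · exact ord_nb_false.2 ⟨key rfl, hRo, ord⟩
    · rcases hb with hb | hb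
      · exact absurd hb (by decide)
      · exact ord_nb_true.2 ⟨by simp [hb], ord, hRo⟩

/-- A single path node with its light subtree above it, to the left, and the rest below. -/
lemma soloL {hi y₀ : ℝ} {D R : DT} {v : Pt} (hv : v = (0, y₀)) (hy : y₀ ≤ hi)
    (le1 : ∀ p ∈ D.verts, p.1 ≤ -1) (gt2 : ∀ p ∈ D.verts, y₀ < p.2) (le2 : ∀ p ∈ D.verts, p.2 ≤ hi)
    (good : Good v D) (ord : Ord v D)
    (hR : ∀ p ∈ R.verts, p.2 < y₀) (hRg : Good v R) (hRo : Ord v R) :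
    IntL hi (nb true v D R) := by
  have v1 : v.1 = 0 := by rw [hv]
  have v2 : v.2 = y₀ := by rw [hv]
  refine ⟨by simp [v1], ?_, fun q hq0 hq1 hq => ⟨?_, ?_⟩⟩
  · intro p hp
    simp only [verts_nb, Set.mem_union, Set.mem_singleton_iff] at hp
    rcases hp with (rfl | hp) | hp
    · linarith
    · exact le2 p hp
    · linarith [hR p hp]
  · rw [good_nb]
    refine ⟨fun e => by rw [e] at hq; linarith, good, hRg, ?_, ?_, ?_⟩
    · intro x hx hx'
      rcases supp_above (fun p hp => by rw [v2]; exact gt2 p hp) hx with h | h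
      · exact h
      rcases supp_below (fun p hp => by rw [v2]; exact hR p hp) hx' with h' | h'
      · exact h'
      · linarith
    · intro x hx hx'
      rcases supp_left (fun p hp => by rw [v1]; linarith [le1 p hp]) hx' with h' | h'
      · exact h'
      · linarith [seg_ge1 hx hq0 v1.ge]
    · intro x hx hx'
      rcases supp_below (fun p hp => by rw [v2]; exact hR p hp) hx' with h' | h'
      · exact h'
      · linarith [seg_ge2 hx (by linarith : y₀ ≤ q.2) v2.ge]
  · refine ord_nb_true.2 ⟨fun r hr z hz => ?_, ord, hRo⟩
    have := le1 r (rt_sub_verts _ hr)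
    have := gt2 r (rt_sub_verts _ hr)
    have := hR z (rt_sub_verts _ hz)
    refine (ccw_half 0 1 (a := q - v) (b := r - v) (c := z - v) ?_ ?_ ?_ ?_).rot
    all_goals simp only [cr, Prod.fst_sub, Prod.snd_sub, v1, v2]
    all_goals nlinarith

/-- The topmost path node, with its light subtree below it to the right, can be joined to every
point above. -/
lemma topWrap {X y₀ a₁ a₂ hR : ℝ} {D R : DT} {v : Pt} (hv : v = (0, y₀)) (h : LLight X a₁ a₂ D)
    (ha : a₂ < y₀) (h1 : hR < a₁) (h2 : hR < y₀) (hI : IntL hR R) (q : Pt) (hq : y₀ < q.2) :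
    Good q (nb false v D R) ∧ Ord q (nb false v D R) := by
  have v1 : v.1 = 0 := by rw [hv]
  have v2 : v.2 = y₀ := by rw [hv]
  obtain ⟨i1, i2, i3⟩ := hI
  obtain ⟨g, o⟩ := i3 v v1.ge (by linarith) (by linarith)
  constructor
  · rw [good_nb]
    refine ⟨fun e => by rw [e] at hq; linarith, h.good v (by linarith), g, ?_, ?_, ?_⟩
    · intro x hx hx'
      rcases supp_cases hx' with ⟨z, hz, hz'⟩ | hb
      · rcases supp_right (fun p hp => by linarith [h.ge1 p hp]) hx with e | e
        · exact e
        · linarith [seg_le1 hz' v1.le (i1 z hz).le]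
      · have j : x.2 ≤ hR := body_sub_convex (convex_le2 _) R i2 hb
        have : hR < x.2 := supp_sub_convex (convex_gt2 hR) D v (by simpa [v2])
            (fun p hp => h1.trans_le (h.ge2 p hp)) hx
        linarith
    · intro x hx hx'
      rcases supp_below (fun p hp => by linarith [h.le2 p hp]) hx' with h' | h'
      · exact h'
      · linarith [seg_ge2 hx hq.le v2.ge]
    · intro x hx hx'
      rcases supp_below (fun p hp => by linarith [i2 p hp]) hx' with h' | h'
      · exact h'
      · linarith [seg_ge2 hx hq.le v2.ge]
  · refine ord_nb_false.2 ⟨fun z hz r hr => ?_, o, h.ord v (by linarith)⟩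
    have := h.root r hr
    have := h.le2 r (rt_sub_verts _ hr)
    have := i1 z hz
    have := i2 z (rt_sub_verts _ hz)
    refine ccw_half 0 (-1) ?_ ?_ ?_ ?_
    all_goals simp only [cr, Prod.fst_sub, Prod.snd_sub, *]
    all_goals nlinarith

/-- A drawing in the half plane `x ≥ 0` can also be entered from the left. -/
lemma IntL.left {hi : ℝ} {D : DT} (h : IntL hi D) (h0 : ∀ p ∈ D.verts, 0 ≤ p.1) (q : Pt)
    (hq : q.1 < 0) : Good q D ∧ Ord q D := by
  obtain ⟨i1, i2, i3⟩ := h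
  obtain ⟨g, o⟩ := i3 (0, hi + 1) le_rfl zero_le_one (by simp)
  refine ⟨g.replant fun z hz => ?_, ?_⟩
  · have e := i1 z hz
    refine ⟨fun h => by rw [h] at hq; linarith, fun x hx hx' => ?_⟩
    have j : 0 ≤ x.1 := body_sub_convex (convex_ge1 0) D h0 hx'
    exact seg_end1 hx (by linarith) (by linarith [seg_le1 hx hq.le e.le])
  · cases D with
    | nil => trivial
    | node p l r =>
      refine ⟨fun a ha b hb => ?_, o.2⟩
      have e := i1 p rfl
      have lp := i2 p (by simp [verts])
      have ea := h0 a (by simp [verts, rt_sub_verts l ha])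
      have eb := h0 b (by simp [verts, rt_sub_verts r hb])
      have := o.1 a ha b hb
      -- both children lie to the right, so the direction upwards can be replaced by any direction
      -- to the left
      have c : cr (((0 : ℝ), hi + 1) - p) (a - p) ≤ 0 := by
        simp only [cr, Prod.fst_sub, Prod.snd_sub, e]; nlinarith
      have c' : 0 < cr (a - p) (b - p) := by
        rcases this with k | k | k
        · exact absurd k.1 (not_lt.2 c)
        · exact k.1
        · exact absurd k.2 (not_lt.2 c)
      refine ccw_half 1 0 c' ?_ ?_ ?_
      all_goals simp only [Prod.fst_sub, Prod.snd_sub, e]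
      all_goals linarith

end TreeDraw

namespace TreeDraw
open DT

/-! ### Grid drawings entered from one side -/

/-- The grid points of a rectangle. -/
def box (x₀ x₁ y₀ y₁ : ℤ) : Set Pt :=
  {p | ∃ i j : ℤ, p = ((i : ℝ), (j : ℝ)) ∧ x₀ ≤ i ∧ i ≤ x₁ ∧ y₀ ≤ j ∧ j ≤ y₁}

lemma box_mono {x₀ x₁ y₀ y₁ x₀' x₁' y₀' y₁' : ℤ} (h0 : x₀' ≤ x₀) (h1 : x₁ ≤ x₁') (h2 : y₀' ≤ y₀)
    (h3 : y₁ ≤ y₁') : box x₀ x₁ y₀ y₁ ⊆ box x₀' x₁' y₀' y₁' := by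
  rintro p ⟨i, j, rfl, a, b, c, d⟩
  exact ⟨i, j, rfl, by omega, by omega, by omega, by omega⟩

lemma mem_box {x₀ x₁ y₀ y₁ i j : ℤ} (h0 : x₀ ≤ i) (h1 : i ≤ x₁) (h2 : y₀ ≤ j) (h3 : j ≤ y₁) :
    (((i : ℝ), (j : ℝ)) : Pt) ∈ box x₀ x₁ y₀ y₁ := ⟨i, j, rfl, h0, h1, h2, h3⟩

lemma box_bounds {x₀ x₁ y₀ y₁ : ℤ} {p : Pt} (h : p ∈ box x₀ x₁ y₀ y₁) :
    (x₀ : ℝ) ≤ p.1 ∧ p.1 ≤ x₁ ∧ (y₀ : ℝ) ≤ p.2 ∧ p.2 ≤ y₁ := by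
  obtain ⟨i, j, rfl, a, b, c, d⟩ := h
  simp only
  exact ⟨by exact_mod_cast a, by exact_mod_cast b, by exact_mod_cast c, by exact_mod_cast d⟩

/-- The tree has a drawing in a grid of width `X` and height `Y` with its root in the leftmost
column, which remains good when the root is joined to any point to the left of the grid. -/
def LRT (X Y : ℕ) (T : BT) : Prop :=
  ∃ D : DT, D.shape = T ∧ D.verts ⊆ box 0 (X - 1) 0 (Y - 1) ∧ (∀ z ∈ D.rt, z.1 = 0) ∧
    ∀ q : Pt, q.1 < 0 → Good q D ∧ Ord q D

/-- The spine has a drawing in a grid of width `X` and height `Y` with its first node in the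
leftmost column and its last node in the rightmost column, which remains good when the first node
is joined to any point to the left and the last one to any point to the right of the grid. -/
def LRC (X Y : ℕ) (s : Spine) : Prop :=
  ∃ c : DC, c.shape = s ∧ c.verts ⊆ box 0 (X - 1) 0 (Y - 1) ∧
    (∀ z ∈ (c.plug nil).rt, z.1 = 0) ∧ (∀ q, (c.last q).1 = X - 1) ∧
    ∀ q z : Pt, q.1 < 0 → (X : ℝ) - 1 < z.1 → Good q (c.plug (leaf z)) ∧ Ord q (c.plug (leaf z))

lemma LRT.mono {X Y X' Y' : ℕ} {T : BT} (h : LRT X Y T) (hX : X ≤ X') (hY : Y ≤ Y') :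
    LRT X' Y' T := by
  obtain ⟨D, h1, h2, h3⟩ := h
  exact ⟨D, h1, h2.trans (box_mono le_rfl (by omega) le_rfl (by omega)), h3⟩

lemma LRC.mono {X Y Y' : ℕ} {s : Spine} (h : LRC X Y s) (hY : Y ≤ Y') : LRC X Y' s := by
  obtain ⟨D, h1, h2, h3⟩ := h
  exact ⟨D, h1, h2.trans (box_mono le_rfl (by omega) le_rfl (by omega)), h3⟩

lemma tr_goodord {s : Bool} {g : Aff} (hg : g.Det s) {D : DT} {q' : Pt} (q : Pt) (e : g.ap q = q')
    (h : Good q D ∧ Ord q D) : Good q' (D.tr s g) ∧ Ord q' (D.tr s g) := by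
  subst e; exact ⟨good_tr hg D q h.1, ord_tr hg D q h.2⟩

/-- Reflection in a horizontal line. -/
lemma LRT.mirror {X Y : ℕ} {T : BT} (h : LRT X Y T) : LRT X Y T.mirror := by
  obtain ⟨D, rfl, h2, h3, h4⟩ := h
  refine ⟨D.tr true ⟨1, 0, 0, -1, 0, (Y - 1 : ℤ)⟩, shape_tr_true D, ?_, ?_, ?_⟩
  · rw [verts_tr]
    rintro _ ⟨p, hp, rfl⟩
    obtain ⟨i, j, rfl, a, b, c, d⟩ := h2 hp
    refine ⟨i, Y - 1 - j, ?_, a, b, by omega, by omega⟩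
    ext <;> simp [Aff.ap]; ring
  · rw [rt_tr]
    rintro _ ⟨p, hp, rfl⟩
    simp [Aff.ap, h3 p hp]
  · intro q hq
    refine tr_goodord (by simp [Aff.Det]) (q.1, (Y - 1 : ℤ) - q.2) ?_ (h4 _ hq)
    ext <;> simp [Aff.ap]

/-- Reflection in a horizontal line. -/
lemma LRC.mirror {X Y : ℕ} {s : Spine} (h : LRC X Y s) : LRC X Y (mirS s) := by
  obtain ⟨c, rfl, h2, h3, h4, h5⟩ := h
  refine ⟨c.tr true ⟨1, 0, 0, -1, 0, (Y - 1 : ℤ)⟩, DC.shape_tr_true c, ?_, ?_, ?_, ?_⟩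
  · rw [DC.verts_tr]
    rintro _ ⟨p, hp, rfl⟩
    obtain ⟨i, j, rfl, a, b, c, d⟩ := h2 hp
    refine ⟨i, Y - 1 - j, ?_, a, b, by omega, by omega⟩
    ext <;> simp [Aff.ap]; ring
  · have : (c.tr true ⟨1, 0, 0, -1, 0, (Y - 1 : ℤ)⟩).plug nil
        = (c.plug nil).tr true ⟨1, 0, 0, -1, 0, (Y - 1 : ℤ)⟩ := (DC.tr_plug c nil).symm
    rw [this, rt_tr]
    rintro _ ⟨p, hp, rfl⟩
    simp [Aff.ap, h3 p hp]
  · intro q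
    have e : q = (⟨1, 0, 0, -1, 0, (Y - 1 : ℤ)⟩ : Aff).ap (q.1, (Y - 1 : ℤ) - q.2) := by
      ext <;> simp [Aff.ap]
    rw [e, DC.last_tr]
    simp [Aff.ap, h4]
  · intro q z hq hz
    have e : leaf z = (leaf (z.1, (Y - 1 : ℤ) - z.2)).tr true ⟨1, 0, 0, -1, 0, (Y - 1 : ℤ)⟩ := by
      rw [tr_leaf]; congr 1; ext <;> simp [Aff.ap]
    rw [e, ← DC.tr_plug]
    refine tr_goodord (by simp [Aff.Det]) (q.1, (Y - 1 : ℤ) - q.2) ?_ (h5 _ _ hq hz)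
    ext <;> simp [Aff.ap]

/-- The drawing translated to the columns `1..X` and the rows from `b` on; its root is on the
left. -/
lemma LRT.placeL {X Y : ℕ} {T : BT} (h : LRT X Y T) (b : ℤ) :
    ∃ D : DT, D.shape = T ∧ D.verts ⊆ box 1 X b (b + Y - 1) ∧
      LLight (X : ℝ) (b : ℝ) ((b + Y - 1 : ℤ) : ℝ) D := by
  obtain ⟨D, rfl, h2, h3, h4⟩ := h
  have hv : (D.tr false ⟨1, 0, 0, 1, 1, b⟩).verts ⊆ box 1 X b (b + Y - 1) := by
    rw [verts_tr]
    rintro _ ⟨p, hp, rfl⟩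
    obtain ⟨i, j, rfl, _, _, _, _⟩ := h2 hp
    refine ⟨i + 1, j + b, ?_, by omega, by omega, by omega, by omega⟩
    ext <;> simp [Aff.ap]
  have hg : ∀ q : Pt, q.1 < 1 → Good q (D.tr false ⟨1, 0, 0, 1, 1, b⟩) ∧
      Ord q (D.tr false ⟨1, 0, 0, 1, 1, b⟩) := by
    intro q hq
    refine tr_goodord (by simp [Aff.Det]) (q.1 - 1, q.2 - b) ?_ (h4 _ (by simpa using hq))
    ext <;> simp [Aff.ap]
  refine ⟨D.tr false ⟨1, 0, 0, 1, 1, b⟩, shape_tr_false D, hv, ?_⟩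
  refine ⟨fun p hp => by simpa using (box_bounds (hv hp)).1, fun p hp => by
    simpa using (box_bounds (hv hp)).2.1, fun p hp => (box_bounds (hv hp)).2.2.1,
    fun p hp => (box_bounds (hv hp)).2.2.2, ?_, fun q hq => (hg q hq).1, fun q hq => (hg q hq).2⟩
  rw [rt_tr]
  rintro _ ⟨p, hp, rfl⟩
  simp [Aff.ap, h3 p hp]

/-- The drawing rotated by `π`, placed in the columns `1..X` and the rows from `b` on; its root is on
the right, and left and right children keep their order. -/
lemma LRT.placeR {X Y : ℕ} {T : BT} (h : LRT X Y T) (b : ℤ) :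
    ∃ D : DT, D.shape = T ∧ D.verts ⊆ box 1 X b (b + Y - 1) ∧
      RLight (X : ℝ) (b : ℝ) ((b + Y - 1 : ℤ) : ℝ) D := by
  obtain ⟨D, rfl, h2, h3, h4⟩ := h
  have hv : (D.tr false ⟨-1, 0, 0, -1, X, (b + Y - 1 : ℤ)⟩).verts ⊆ box 1 X b (b + Y - 1) := by
    rw [verts_tr]
    rintro _ ⟨p, hp, rfl⟩
    obtain ⟨i, j, rfl, _, _, _, _⟩ := h2 hp
    refine ⟨X - i, b + Y - 1 - j, ?_, by omega, by omega, by omega, by omega⟩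
    ext <;> simp [Aff.ap] <;> ring
  have hg : ∀ q : Pt, X < q.1 → Good q (D.tr false ⟨-1, 0, 0, -1, X, (b + Y - 1 : ℤ)⟩) ∧
      Ord q (D.tr false ⟨-1, 0, 0, -1, X, (b + Y - 1 : ℤ)⟩) := by
    intro q hq
    refine tr_goodord (by simp [Aff.Det]) (X - q.1, (b + Y - 1 : ℤ) - q.2) ?_
      (h4 _ (by simpa using hq))
    ext <;> simp [Aff.ap]
  refine ⟨_, shape_tr_false D, hv, ?_⟩
  refine ⟨fun p hp => by simpa using (box_bounds (hv hp)).1, fun p hp => by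
    simpa using (box_bounds (hv hp)).2.1, fun p hp => (box_bounds (hv hp)).2.2.1,
    fun p hp => (box_bounds (hv hp)).2.2.2, ?_, fun q hq => (hg q hq).1, fun q hq => (hg q hq).2⟩
  rw [rt_tr]
  rintro _ ⟨p, hp, rfl⟩
  simp [Aff.ap, h3 p hp]

/-- The same, placed to the left of the line `x = 0`. -/
lemma LRT.placeLL {X Y : ℕ} {T : BT} (h : LRT X Y T) (b : ℤ) :
    ∃ D : DT, D.shape = T ∧ D.verts ⊆ box (-X) (-1) b (b + Y - 1) ∧
      ∀ q : Pt, 0 ≤ q.1 → Good q D ∧ Ord q D := by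
  obtain ⟨D, rfl, h2, h3, h4⟩ := h
  refine ⟨D.tr false ⟨-1, 0, 0, -1, -1, (b + Y - 1 : ℤ)⟩, shape_tr_false D, ?_, ?_⟩
  · rw [verts_tr]
    rintro _ ⟨p, hp, rfl⟩
    obtain ⟨i, j, rfl, _, _, _, _⟩ := h2 hp
    refine ⟨-1 - i, b + Y - 1 - j, ?_, by omega, by omega, by omega, by omega⟩
    ext <;> simp [Aff.ap] <;> ring
  · intro q hq
    refine tr_goodord (by simp [Aff.Det]) (-1 - q.1, (b + Y - 1 : ℤ) - q.2) ?_
      (h4 _ (by simp; linarith))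
    ext <;> simp [Aff.ap]

/-- A drawn spine rotated by `π`: it is entered from the right and left to the left. -/
lemma LRC.placeR {X Y : ℕ} {s : Spine} (h : LRC X Y s) (b : ℤ) :
    ∃ c : DC, c.shape = s ∧ c.verts ⊆ box 1 X b (b + Y - 1) ∧
      (∀ z ∈ (c.plug nil).rt, z.1 = X) ∧ (∀ q, (c.last q).1 = 1) ∧
      ∀ q z : Pt, X < q.1 → z.1 < 1 → Good q (c.plug (leaf z)) ∧ Ord q (c.plug (leaf z)) := by
  obtain ⟨c, rfl, h2, h3, h4, h5⟩ := h
  set g : Aff := ⟨-1, 0, 0, -1, X, (b + Y - 1 : ℤ)⟩ with hgdef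
  have hinv : ∀ q : Pt, g.ap (X - q.1, (b + Y - 1 : ℤ) - q.2) = q := by
    intro q; ext <;> simp [Aff.ap, hgdef]
  refine ⟨c.tr false g, DC.shape_tr_false c, ?_, ?_, ?_, ?_⟩
  · rw [DC.verts_tr]
    rintro _ ⟨p, hp, rfl⟩
    obtain ⟨i, j, rfl, a, b', c, d⟩ := h2 hp
    refine ⟨X - i, b + Y - 1 - j, ?_, by omega, by omega, by omega, by omega⟩
    ext <;> simp [Aff.ap, hgdef] <;> ring
  · have : (c.tr false g).plug nil = (c.plug nil).tr false g := (DC.tr_plug c nil).symm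
    rw [this, rt_tr]
    rintro _ ⟨p, hp, rfl⟩
    simp [Aff.ap, h3 p hp, hgdef]
  · intro q
    rw [← hinv q, DC.last_tr]
    simp [Aff.ap, h4, hgdef]
  · intro q z hq hz
    have e : leaf z = (leaf (X - z.1, (b + Y - 1 : ℤ) - z.2)).tr false g := by
      rw [tr_leaf, hinv]
    rw [e, ← DC.tr_plug]
    refine tr_goodord (by simp [Aff.Det, hgdef]) _ (hinv q) (h5 _ _ ?_ ?_)
    · simpa using hq
    · simp only; linarith

lemma IntL.mono {hi hi' : ℝ} {D : DT} (h : IntL hi D) (hh : hi ≤ hi') : IntL hi' D :=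
  ⟨h.1, fun p hp => (h.2.1 p hp).trans hh, fun q a b c => h.2.2 q a b (hh.trans_lt c)⟩

/-- Placement of two consecutive path nodes with their light subtrees at the top of the strip. -/
lemma pairPlaced {X m₁ m₂ : ℕ} (hX : 1 ≤ X) (bv bw : Bool) {L₁ L₂ : BT} (h₁ : LRT X m₁ L₁)
    (h₂ : LRT X m₂ L₂) (hi : ℤ) :
    ∃ (v : Pt) (D₁ : DT) (w : Pt) (D₂ : DT), D₁.shape = L₁ ∧ D₂.shape = L₂ ∧
      w.1 = (X : ℝ) + 1 ∧ ((hi - m₁ - m₂ : ℤ) : ℝ) ≤ w.2 ∧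
      {v} ∪ D₁.verts ⊆ box 0 (X + 1) (hi - m₁ - m₂) hi ∧
      {w} ∪ D₂.verts ⊆ box 0 (X + 1) (hi - m₁ - m₂) hi ∧
      ∀ R : DT, (∀ p ∈ R.verts, p.2 ≤ ((hi - m₁ - m₂ - 1 : ℤ) : ℝ)) →
        (∀ p ∈ R.rt, p.1 = X ∨ p.1 = X + 1) → Good w R → Ord w R →
        IntL hi (nb bv v D₁ (nb bw w D₂ R)) := by
  -- the rows used above the common level
  obtain ⟨y, hy⟩ : ∃ y : ℤ, y = hi - (if bv then 0 else m₁) - (if bw then 0 else m₂) := ⟨_, rfl⟩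
  obtain ⟨a, ha⟩ : ∃ a : ℤ, a = if bv then y - m₁ else y + 1 := ⟨_, rfl⟩
  obtain ⟨b, hb⟩ : ∃ b : ℤ, b = if bw then y - (if bv then m₁ else 0) - m₂
    else y + 1 + (if bv then 0 else m₁) := ⟨_, rfl⟩
  obtain ⟨D₁, e₁, k₁, l₁⟩ := h₁.placeL a
  obtain ⟨D₂, e₂, k₂, l₂⟩ := h₂.placeR b
  have key : (bv = true → a + m₁ - 1 < y) ∧ (bv = false → y < a) ∧
      (bw = true → b + m₂ - 1 < y) ∧ (bw = false → y < b) ∧ a + m₁ - 1 ≤ hi ∧ b + m₂ - 1 ≤ hi ∧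
      (a + m₁ - 1 < b ∨ b + m₂ - 1 < a) ∧ hi - m₁ - m₂ ≤ a ∧ hi - m₁ - m₂ ≤ b ∧
      hi - m₁ - m₂ ≤ y ∧ y ≤ hi := by
    cases bv <;> cases bw <;> simp at hy ha hb ⊢ <;> omega
  obtain ⟨q1, q2, q3, q4, q5, q6, q7, q8, q9, q10, q11⟩ := key
  refine ⟨(0, y), D₁, (X + 1, y), D₂, e₁, e₂, rfl, by simp only; exact_mod_cast q10, ?_, ?_, ?_⟩
  · refine Set.union_subset ?_ (k₁.trans (box_mono (by omega) (by omega) (by omega) (by omega)))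
    rw [Set.singleton_subset_iff]
    simpa using mem_box (i := 0) (j := y) le_rfl (by omega) q10 q11
  · refine Set.union_subset ?_ (k₂.trans (box_mono (by omega) (by omega) (by omega) (by omega)))
    rw [Set.singleton_subset_iff]
    simpa using mem_box (i := X + 1) (j := y) (by omega) le_rfl q10 q11
  · intro R hR hRr hg ho
    refine pair (X := X) (by exact_mod_cast hX) rfl rfl (by exact_mod_cast q11) l₁ l₂ ?_ ?_ ?_ ?_
      (by exact_mod_cast q5) (by exact_mod_cast q6) (by exact_mod_cast q7) ?_ ?_ ?_ hR hRr hg ho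
    · intro h; exact_mod_cast q1 h
    · intro h; exact_mod_cast q2 h
    · intro h; exact_mod_cast q3 h
    · intro h; exact_mod_cast q4 h
    · have : hi - m₁ - m₂ - 1 < a := by omega
      exact_mod_cast this
    · have : hi - m₁ - m₂ - 1 < b := by omega
      exact_mod_cast this
    · have : hi - m₁ - m₂ - 1 < y := by omega
      exact_mod_cast this

/-- Placement of a single path node at height `y`, using columns on both sides of the strip. -/
lemma soloPlaced {X m : ℕ} (b : Bool) {L : BT} (h : LRT X m L) (y : ℤ) :
    ∃ (v : Pt) (D : DT), D.shape = L ∧ v = ((0, y) : Pt) ∧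
      {v} ∪ D.verts ⊆ box (-X) (2 * X + 1) y (y + m) ∧
      ∀ R : DT, (∀ p ∈ R.verts, p.2 < y) → Good v R → Ord v R →
        IntL ((y + m : ℤ) : ℝ) (nb b v D R) := by
  have hv : {((0, y) : Pt)} ⊆ box (-X) (2 * X + 1) y (y + m) := by
    rw [Set.singleton_subset_iff]
    simpa using mem_box (i := 0) (j := y) (by omega : (-X : ℤ) ≤ 0) (by omega : 0 ≤ 2 * (X:ℤ) + 1)
      le_rfl (by omega : y ≤ y + m)
  have hyy : (y : ℝ) ≤ ((y + m : ℤ) : ℝ) := by exact_mod_cast (by omega : y ≤ y + m)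
  cases b
  · obtain ⟨D, e, k, l⟩ := h.placeL (y + 1)
    refine ⟨_, D, e, rfl, Set.union_subset hv (k.trans (box_mono (by omega) (by omega) (by omega)
      (by omega))), fun R hR hg ho => ?_⟩
    refine soloR rfl hyy l.ge1 ?_ ?_ l.root (l.good _ (by simp)) (l.ord _ (by simp)) hR hg ho
      (Or.inl rfl)
    · intro p hp; have := l.ge2 p hp; push_cast at this; linarith
    · intro p hp; have := l.le2 p hp; push_cast at this ⊢; linarith
  · obtain ⟨D, e, k, l⟩ := h.placeLL (y + 1)
    refine ⟨_, D, e, rfl, Set.union_subset hv (k.trans (box_mono (by omega) (by omega) (by omega)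
      (by omega))), fun R hR hg ho => ?_⟩
    refine soloL rfl hyy ?_ ?_ ?_ (l _ le_rfl).1 (l _ le_rfl).2 hR hg ho
    · intro p hp; simpa using (box_bounds (k hp)).2.1
    · intro p hp; have := (box_bounds (k hp)).2.2.1; push_cast at this; linarith
    · intro p hp; have := (box_bounds (k hp)).2.2.2; push_cast at this ⊢; linarith

/-- Placement of a path node without a heavy child. -/
lemma endPlaced {X m : ℕ} (b : Bool) {L : BT} (h : LRT X m L) (y : ℤ) :
    ∃ (v : Pt) (D : DT), D.shape = L ∧ {v} ∪ D.verts ⊆ box 0 (X + 1) y (y + m) ∧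
      IntL ((y + m : ℤ) : ℝ) (nb b v D nil) := by
  have hyy : (y : ℝ) ≤ ((y + m : ℤ) : ℝ) := by exact_mod_cast (by omega : y ≤ y + m)
  obtain ⟨D, e, k, l⟩ := h.placeL (y + 1)
  refine ⟨(0, y), D, e, Set.union_subset ?_ (k.trans (box_mono (by omega) (by omega) (by omega)
      (by omega))), ?_⟩
  · rw [Set.singleton_subset_iff]
    simpa using mem_box (i := 0) (j := y) (le_refl (0 : ℤ)) (by omega : 0 ≤ (X:ℤ) + 1)
      le_rfl (by omega : y ≤ y + m)
  · refine soloR rfl hyy l.ge1 ?_ ?_ l.root (l.good _ (by simp)) (l.ord _ (by simp))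
      (by simp [verts]) trivial trivial (Or.inr rfl)
    · intro p hp; have := l.ge2 p hp; push_cast at this; linarith
    · intro p hp; have := l.le2 p hp; push_cast at this ⊢; linarith

end TreeDraw

namespace TreeDraw
open DT

/-! ### Drawing a spine in a strip -/

/-- What may follow a drawn spine: nothing if `m = false`, and an arbitrary point below the level
`lo` if `m = true`. -/
def Tail (m : Bool) (lo : ℤ) (t : DT) : Prop :=
  (m = false ∧ t = nil) ∨ (m = true ∧ ∃ z : Pt, t = leaf z ∧ z.2 < lo)

/-- The spine has a drawing in the rows `lo..hi`, starting in column `0`, that can be entered from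
above; it occupies the strip of columns `0..X+1`, and `X` further columns on both sides if its last
node has to remain accessible from below (`m = true`). -/
def SpineDrawn (X : ℕ) (m : Bool) (lo hi : ℤ) (s : Spine) : Prop :=
  ∃ c : DC, c.shape = s ∧
    c.verts ⊆ box (-(if m then X else 0 : ℤ)) (X + 1 + (if m then X else 0 : ℤ)) lo hi ∧
    (m = true → ∀ q, (c.last q).2 = lo) ∧ ∀ t, Tail m lo t → IntL hi (c.plug t)

lemma SpineDrawn.mono {X : ℕ} {m : Bool} {lo hi hi' : ℤ} {s : Spine} (h : SpineDrawn X m lo hi s)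
    (hh : hi ≤ hi') : SpineDrawn X m lo hi' s := by
  obtain ⟨c, h1, h2, h3, h4⟩ := h
  exact ⟨c, h1, h2.trans (box_mono le_rfl le_rfl le_rfl hh), h3,
    fun t ht => (h4 t ht).mono (by exact_mod_cast hh)⟩

lemma spine_nil (X : ℕ) (lo hi : ℤ) : SpineDrawn X false lo hi [] := by
  refine ⟨[], rfl, ?_, by simp, ?_⟩
  · simp [DC.verts, DC.plug, verts]
  · rintro t (⟨_, rfl⟩ | ⟨h, _⟩)
    · exact ⟨by simp [DC.plug, rt], by simp [DC.plug, verts], fun q _ _ _ => ⟨trivial, trivial⟩⟩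
    · exact absurd h (by decide)

lemma spine_one {X m₁ : ℕ} {b : Bool} {L : BT} (h : LRT X m₁ L) {lo hi : ℤ} (hh : lo ≤ hi - m₁) :
    SpineDrawn X false lo hi [(b, L)] := by
  obtain ⟨v, D, e, k, i⟩ := endPlaced b h (hi - m₁)
  refine ⟨[(b, v, D)], by simp [DC.shape, e], ?_, by simp, ?_⟩
  · rw [verts_cons]
    refine Set.union_subset (k.trans (box_mono (by simp) (by simp) hh (by omega))) ?_
    simp [DC.verts, DC.plug, verts]
  · rintro t (⟨_, rfl⟩ | ⟨h, _⟩)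
    · simpa [DC.plug] using i
    · exact absurd h (by decide)

lemma spine_two {X m₁ m₂ : ℕ} (hX : 1 ≤ X) {b b' : Bool} {L L' : BT} (h : LRT X m₁ L)
    (h' : LRT X m₂ L') {lo hi : ℤ} (hh : lo ≤ hi - m₁ - m₂) :
    SpineDrawn X false lo hi [(b, L), (b', L')] := by
  obtain ⟨v, D₁, w, D₂, e₁, e₂, _, _, k₁, k₂, i⟩ := pairPlaced hX b b' h h' hi
  refine ⟨[(b, v, D₁), (b', w, D₂)], by simp [DC.shape, e₁, e₂], ?_, by simp, ?_⟩
  · rw [verts_cons, verts_cons]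
    refine Set.union_subset (k₁.trans (box_mono (by simp) (by simp) hh le_rfl))
      (Set.union_subset (k₂.trans (box_mono (by simp) (by simp) hh le_rfl)) ?_)
    simp [DC.verts, DC.plug, verts]
  · rintro t (⟨_, rfl⟩ | ⟨h, _⟩)
    · exact i nil (by simp [verts]) (by simp [rt]) trivial trivial
    · exact absurd h (by decide)

/-- A single node that continues: the path goes on below, so the node is put on the bottom row. -/
lemma spine_one' {X m₁ : ℕ} {b : Bool} {L : BT} (h : LRT X m₁ L) {lo hi : ℤ} (hh : lo ≤ hi - m₁) :
    SpineDrawn X true lo hi [(b, L)] := by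
  obtain ⟨v, D, e, hv, k, i⟩ := soloPlaced b h lo
  refine ⟨[(b, v, D)], by simp [DC.shape, e], ?_, by simp [DC.last, hv], ?_⟩
  · rw [verts_cons]
    refine Set.union_subset (k.trans (box_mono (by simp) (by simp; omega) le_rfl (by omega))) ?_
    simp [DC.verts, DC.plug, verts]
  · rintro t (⟨h, _⟩ | ⟨_, z, rfl, hz⟩)
    · exact absurd h (by decide)
    · refine (i (leaf z) (by simpa [leaf, verts] using hz) ?_ ?_).mono
        (by exact_mod_cast (by omega : lo + m₁ ≤ hi))
      · refine ⟨fun e => ?_, trivial, trivial, by simp [supp], by simp [supp], by simp [supp]⟩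
        rw [← e, hv] at hz; simp at hz
      · exact ⟨by simp [rt], trivial, trivial⟩

/-- Two nodes that continue: both on the left side of the strip, the second on the bottom row. -/
lemma spine_two' {X m₁ m₂ : ℕ} {b b' : Bool} {L L' : BT} (h : LRT X m₁ L)
    (h' : LRT X m₂ L') {lo hi : ℤ} (hh : lo ≤ hi - m₁ - m₂ - 1) :
    SpineDrawn X true lo hi [(b, L), (b', L')] := by
  obtain ⟨c, e, k, l, i⟩ := spine_one' (b := b') h' (le_refl (lo + m₂ - m₂))
  rw [add_sub_cancel_right] at k l i
  obtain ⟨v, D, e₁, hv, k₁, i₁⟩ := soloPlaced b h (lo + m₂ + 1)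
  refine ⟨(b, v, D) :: c, ?_, ?_, fun hm q => l hm v, fun t ht => ?_⟩
  · simp only [DC.shape, List.map_cons, e₁] at e ⊢; rw [e]
  · rw [verts_cons]
    refine Set.union_subset (k₁.trans (box_mono (by simp) (by simp; omega) (by omega) (by omega)))
      (k.trans (box_mono le_rfl le_rfl le_rfl (by omega)))
  · obtain ⟨j1, j2, j3⟩ := i t ht
    have hlt : ((lo + m₂ : ℤ) : ℝ) < ((lo + m₂ + 1 : ℤ) : ℝ) := by push_cast; linarith
    obtain ⟨g, o⟩ := j3 v (by simp [hv]) (by simp [hv]) (by rw [hv]; exact hlt)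
    exact (i₁ (c.plug t) (fun p hp => (j2 p hp).trans_lt hlt) g o).mono
      (by exact_mod_cast (by omega : lo + m₂ + 1 + m₁ ≤ hi))

/-- Two nodes on top of a reflected drawing of the remaining spine. -/
lemma spine_direct {X m₁ m₂ : ℕ} (hX : 1 ≤ X) {m b b' : Bool} {L L' : BT} (h : LRT X m₁ L)
    (h' : LRT X m₂ L') {lo hi : ℤ} (hh : lo ≤ hi - m₁ - m₂) {s : Spine}
    (hs : SpineDrawn X m lo (hi - m₁ - m₂ - 1) (mirS s)) :
    SpineDrawn X m lo hi ((b, L) :: (b', L') :: s) := by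
  obtain ⟨v, D₁, w, D₂, e₁, e₂, hw, hw2, k₁, k₂, i⟩ := pairPlaced hX b b' h h' hi
  obtain ⟨c, e, k, l, j⟩ := hs
  set g : Aff := ⟨-1, 0, 0, 1, X + 1, 0⟩ with hg
  have hinv : ∀ q : Pt, g.ap (X + 1 - q.1, q.2) = q := by
    intro q; ext <;> simp [Aff.ap, hg]
  refine ⟨(b, v, D₁) :: (b', w, D₂) :: c.tr true g, ?_, ?_, ?_, fun t ht => ?_⟩
  · have := DC.shape_tr_true (g := g) c
    rw [e, mirS_mirS] at this
    simp only [DC.shape, List.map_cons, e₁, e₂] at this ⊢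
    rw [this]
  · rw [verts_cons, verts_cons]
    have : 0 ≤ (if m then X else 0 : ℤ) := by split <;> simp
    refine Set.union_subset (k₁.trans (box_mono (by omega) (by omega) hh le_rfl))
      (Set.union_subset (k₂.trans (box_mono (by omega) (by omega) hh le_rfl)) ?_)
    rw [DC.verts_tr]
    rintro _ ⟨p, hp, rfl⟩
    obtain ⟨x, y, rfl, _, _, _, _⟩ := k hp
    refine ⟨X + 1 - x, y, ?_, by omega, by omega, by omega, by omega⟩
    ext <;> simp [Aff.ap, hg]; ring
  · intro hm q
    change ((c.tr true g).last w).2 = lo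
    rw [← hinv w, DC.last_tr]
    simp [Aff.ap, hg, l hm]
  · obtain ⟨t', ht', rfl⟩ : ∃ t', Tail m lo t' ∧ t = t'.tr true g := by
      rcases ht with ⟨hm, rfl⟩ | ⟨hm, z, rfl, hz⟩
      · exact ⟨nil, Or.inl ⟨hm, rfl⟩, rfl⟩
      · exact ⟨leaf (X + 1 - z.1, z.2), Or.inr ⟨hm, _, rfl, hz⟩, by rw [tr_leaf, hinv]⟩
    change IntL hi (nb b v D₁ (nb b' w D₂ ((c.tr true g).plug (t'.tr true g))))
    rw [← DC.tr_plug]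
    obtain ⟨j1, j2, j3⟩ := j t' ht'
    obtain ⟨gd, od⟩ := tr_goodord (s := true) (by simp [hg, Aff.Det]) _ (hinv w)
      (j3 (X + 1 - w.1, w.2) (by simp [hw]) (by simp [hw])
        (lt_of_lt_of_le (by push_cast; linarith) hw2))
    refine i _ ?_ ?_ gd od
    · rw [verts_tr]
      rintro _ ⟨p, hp, rfl⟩
      simpa [Aff.ap, hg] using j2 p hp
    · rw [rt_tr]
      rintro _ ⟨p, hp, rfl⟩
      right
      simp [Aff.ap, hg, j1 p hp]

lemma plug_append (c c' : DC) (D : DT) : DC.plug (c ++ c') D = c.plug (c'.plug D) := by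
  induction c with
  | nil => rfl
  | cons i c ih => obtain ⟨b, p, L⟩ := i; simp only [List.cons_append, DC.plug, ih]

lemma last_append (c c' : DC) : ∀ q, DC.last q (c ++ c') = c'.last (c.last q) := by
  induction c with
  | nil => intro q; rfl
  | cons i c ih => obtain ⟨b, p, L⟩ := i; intro q; exact ih p

/-- Two nodes on top of a drawn piece of the spine that leads back to the left side. -/
lemma spine_chunk {X m₁ m₂ Y : ℕ} (hX : 1 ≤ X) {m b b' : Bool} {L L' : BT} (h : LRT X m₁ L)
    (h' : LRT X m₂ L') {lo hi : ℤ} (hh : lo ≤ hi - m₁ - m₂ - Y) {s s' : Spine} (hs' : LRC X Y s')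
    (hne' : s' ≠ []) (hne : s ≠ [])
    (hs : SpineDrawn X m lo (hi - m₁ - m₂ - 1 - Y) s) :
    SpineDrawn X m lo hi ((b, L) :: (b', L') :: (s' ++ s)) := by
  obtain ⟨v, D₁, w, D₂, e₁, e₂, hw, hw2, k₁, k₂, i⟩ := pairPlaced hX b b' h h' hi
  obtain ⟨c, e, k, l, j⟩ := hs
  obtain ⟨d, f1, f2, f3, f4, f5⟩ := hs'.placeR (hi - m₁ - m₂ - Y)
  refine ⟨(b, v, D₁) :: (b', w, D₂) :: (d ++ c), ?_, ?_, ?_, fun t ht => ?_⟩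
  · simp only [DC.shape, List.map_cons, List.map_append, e₁, e₂] at e f1 ⊢
    rw [e, f1]
  · rw [verts_cons, verts_cons]
    have : 0 ≤ (if m then X else 0 : ℤ) := by split <;> simp
    refine Set.union_subset (k₁.trans (box_mono (by omega) (by omega) (by omega) le_rfl))
      (Set.union_subset (k₂.trans (box_mono (by omega) (by omega) (by omega) le_rfl)) ?_)
    rw [DC.verts, plug_append, verts_plug]
    exact Set.union_subset (f2.trans (box_mono (by omega) (by omega) (by omega) (by omega)))
      (k.trans (box_mono (by omega) (by omega) (by omega) (by omega)))
  · intro hm q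
    change (DC.last w (d ++ c)).2 = lo
    rw [last_append]
    exact l hm _
  · change IntL hi (nb b v D₁ (nb b' w D₂ (DC.plug (d ++ c) t)))
    rw [plug_append]
    obtain ⟨j1, j2, j3⟩ := j t ht
    obtain ⟨z, hz⟩ : ∃ z, z ∈ (c.plug t).rt := by
      cases c with
      | nil => exact absurd e.symm hne
      | cons i c => exact ⟨i.2.1, by simp [DC.plug]⟩
    have hdrt : (d.plug (c.plug t)).rt = (d.plug nil).rt := by
      cases d with
      | nil => exact absurd f1.symm hne'
      | cons i c => simp [DC.plug]
    have hz1 := j1 z hz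
    obtain ⟨g, o⟩ := f5 w z (by rw [hw]; linarith) (by rw [hz1]; norm_num)
    have hlast : ((hi - m₁ - m₂ - 1 - Y : ℤ) : ℝ) < (d.last w).2 := by
      have hmem : d.last w ∈ d.verts := by
        have : ∀ (d : DC) (q : Pt), d ≠ [] → d.last q ∈ d.verts := by
          intro d
          induction d with
          | nil => intro q h; exact absurd rfl h
          | cons i d ih =>
            intro q _
            obtain ⟨b, p, L⟩ := i
            rw [verts_cons]
            by_cases hd : d = []
            · subst hd; exact Or.inl (Or.inl rfl)
            · exact Or.inr (ih p hd)
        refine this d w ?_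
        rintro rfl
        exact hne' f1.symm
      refine lt_of_lt_of_le ?_ (box_bounds (f2 hmem)).2.2.1
      push_cast; linarith
    obtain ⟨g', o'⟩ := j3 (d.last w) (by rw [f4]; norm_num) (by rw [f4]) hlast
    refine i _ ?_ ?_ (good_plug hz g g' fun x hx hx' => ?_) (ord_plug hz o o')
    · intro p hp
      rw [verts_plug] at hp
      rcases hp with hp | hp
      · refine (box_bounds (f2 hp)).2.2.2.trans ?_
        push_cast; linarith
      · refine (j2 p hp).trans ?_
        push_cast; linarith [(Nat.cast_nonneg Y : (0:ℝ) ≤ Y)]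
    · intro p hp
      rw [hdrt] at hp
      exact Or.inl (f3 p hp)
    · have a1 : ((hi - m₁ - m₂ - Y : ℤ) : ℝ) ≤ x.2 := by
        refine supp_sub_convex (convex_ge2 _) (d.plug nil) w ?_ (fun p hp =>
          (box_bounds (f2 hp)).2.2.1) hx
        refine le_trans ?_ hw2
        push_cast; linarith [(Nat.cast_nonneg Y : (0:ℝ) ≤ Y)]
      have a2 : x.2 ≤ ((hi - m₁ - m₂ - 1 - Y : ℤ) : ℝ) :=
        body_sub_convex (convex_le2 _) (c.plug t) j2 hx'
      push_cast at a1 a2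
      linarith

/-- Truncated weight of a spine: an item counts at most `M`. -/
def sg (M : ℕ) : Spine → ℕ
  | [] => 0
  | (_, L) :: s => min M (L.size + 1) + sg M s

/-- Total of the extra heights of the light subtrees. -/
def exs (ex : ℕ → ℕ) : Spine → ℕ
  | [] => 0
  | (_, L) :: s => ex L.size + exs ex s

/-- Truncated weight of the first two items. -/
def pre (M : ℕ) : Spine → ℕ
  | [] => 0
  | [(_, L)] => min M (L.size + 1)
  | (_, L) :: (_, L') :: _ => min M (min M (L.size + 1) + min M (L'.size + 1))

lemma sg_mirS (M : ℕ) (s : Spine) : sg M (mirS s) = sg M s := by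
  induction s with
  | nil => rfl
  | cons i s ih => obtain ⟨b, L⟩ := i; simp only [mirS, List.map_cons, sg] at *; simp [ih]

lemma exs_mirS (ex : ℕ → ℕ) (s : Spine) : exs ex (mirS s) = exs ex s := by
  induction s with
  | nil => rfl
  | cons i s ih => obtain ⟨b, L⟩ := i; simp only [mirS, List.map_cons, exs] at *; simp [ih]

lemma pre_mirS (M : ℕ) (s : Spine) : pre M (mirS s) = pre M s := by
  rcases s with _ | ⟨⟨b, L⟩, _ | ⟨⟨b', L'⟩, s⟩⟩ <;> simp [mirS, pre]

lemma pre_le (M : ℕ) (s : Spine) : pre M s ≤ M := by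
  rcases s with _ | ⟨⟨b, L⟩, _ | ⟨⟨b', L'⟩, s⟩⟩ <;> simp [pre]

lemma sg_append (M : ℕ) (s s' : Spine) : sg M (s ++ s') = sg M s + sg M s' := by
  induction s with
  | nil => simp [sg]
  | cons i s ih => obtain ⟨b, L⟩ := i; simp only [List.cons_append, sg, ih]; omega

lemma exs_append (ex : ℕ → ℕ) (s s' : Spine) : exs ex (s ++ s') = exs ex s + exs ex s' := by
  induction s with
  | nil => simp [exs]
  | cons i s ih => obtain ⟨b, L⟩ := i; simp only [List.cons_append, exs, ih]; omega

lemma sg_of_wt {M : ℕ} {s : Spine} (h : wt s ≤ M) : sg M s = wt s := by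
  induction s with
  | nil => rfl
  | cons i s ih =>
    obtain ⟨b, L⟩ := i
    simp only [sg, wt] at *
    rw [ih (by omega), min_eq_right (by omega)]

/-- A maximal initial piece of weight at most `M`, not the whole list. -/
lemma exists_chunk (M : ℕ) (s : Spine) (hs : s ≠ []) : ∃ s₁ s₂ : Spine, s = s₁ ++ s₂ ∧ s₂ ≠ [] ∧
    wt s₁ ≤ M ∧ (2 ≤ s₂.length → M < wt s₁ + s₂.head?.elim 0 fun i => i.2.size + 1) := by
  induction s generalizing M with
  | nil => exact absurd rfl hs
  | cons i s ih =>
    obtain ⟨b, L⟩ := i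
    by_cases h0 : s = []
    · subst h0
      exact ⟨[], [(b, L)], rfl, by simp, by simp [wt], by simp⟩
    by_cases h1 : M < L.size + 1
    · exact ⟨[], (b, L) :: s, rfl, by simp, by simp [wt], fun _ => by simp [wt]; omega⟩
    · obtain ⟨s₁, s₂, e, h2, h3, h4⟩ := ih (M - (L.size + 1)) h0
      refine ⟨(b, L) :: s₁, s₂, by simp [e], h2, by simp only [wt]; omega, fun h => ?_⟩
      simp only [wt]
      have := h4 h
      omega

/-- The height budget `N` suffices for drawing the spine. -/
def Req (M Y : ℕ) (ex : ℕ → ℕ) (s : Spine) (N : ℤ) : Prop :=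
  (s.length ≤ 2 ∧ 4 * (Y : ℤ) + exs ex s ≤ N) ∨
    4 * (Y : ℤ) * (2 * sg M s + 2 * M - pre M s) + M * exs ex s ≤ N * M

lemma pre_le_sg (M : ℕ) (s : Spine) : pre M s ≤ sg M s := by
  rcases s with _ | ⟨⟨b, L⟩, _ | ⟨⟨b', L'⟩, s⟩⟩ <;> simp [pre, sg]

lemma Req.ge {M Y : ℕ} (hM : 1 ≤ M) {ex : ℕ → ℕ} {s : Spine} {N : ℤ} (h : Req M Y ex s N) :
    4 * (Y : ℤ) + exs ex s ≤ N := by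
  rcases h with h | h
  · exact h.2
  · have h1 : (pre M s : ℤ) ≤ M := by exact_mod_cast pre_le M s
    have h2 : (0 : ℤ) ≤ Y * (2 * sg M s + (M - pre M s)) := by
      have : (0 : ℤ) ≤ M - pre M s := by omega
      positivity
    have : (4 * (Y : ℤ) + exs ex s) * M ≤ N * M := by nlinarith
    exact le_of_mul_le_mul_right this (by omega)

lemma Req.ge8 {M Y : ℕ} (hM : 1 ≤ M) {ex : ℕ → ℕ} {s : Spine} {N : ℤ} (h : Req M Y ex s N)
    (hs : 3 ≤ s.length) : 8 * (Y : ℤ) + exs ex s ≤ N := by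
  rcases h with h | h
  · omega
  · have h1 : (pre M s : ℤ) ≤ sg M s := by exact_mod_cast pre_le_sg M s
    have h2 : (0 : ℤ) ≤ Y * (sg M s + (sg M s - pre M s)) := by
      have : (0 : ℤ) ≤ sg M s - pre M s := by omega
      positivity
    have : (8 * (Y : ℤ) + exs ex s) * M ≤ N * M := by nlinarith
    exact le_of_mul_le_mul_right this (by omega)

/-- The remaining spine still has a sufficient budget after two path nodes `i`, `j` and a piece `s₁`.
The height `3 Y + 1` spent on them, apart from the extra heights, is at most `4 Y`. The bound in `Req`
drops by at least `4 Y` because of `hh`; the term `pre` makes the weight of the first two items of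
`s₂` count already in this step. -/
lemma Req.step {M Y : ℕ} (hM : 1 ≤ M) (hY : 1 ≤ Y) {ex : ℕ → ℕ} {s s₁ s₂ : Spine} {i j : Bool × BT}
    {N N' : ℤ} (e : s = i :: j :: (s₁ ++ s₂)) (h : Req M Y ex s N) (hs : s₂ ≠ [])
    (hN' : N - 3 * Y - 1 - ex i.2.size - ex j.2.size ≤ N')
    (hh : 3 ≤ s₂.length → M ≤ 2 * sg M s₁ + pre M s₂) : Req M Y ex s₂ N' := by
  subst e
  have hlen := List.length_pos_of_ne_nil hs
  obtain ⟨b, L⟩ := i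
  obtain ⟨b', L'⟩ := j
  rcases h with h | h
  · simp only [List.length_cons, List.length_append] at h; omega
  have h1 : pre M ((b, L) :: (b', L') :: (s₁ ++ s₂))
      = min M (min M (L.size + 1) + min M (L'.size + 1)) := rfl
  rw [h1] at h
  simp only [sg, exs, sg_append, exs_append] at h hN'
  generalize min M (L.size + 1) = σ₁ at *
  generalize min M (L'.size + 1) = σ₂ at *
  push_cast at h
  have hm1 : (min (M : ℤ) (σ₁ + σ₂)) ≤ M := min_le_left _ _
  have hm2 : (min (M : ℤ) (σ₁ + σ₂)) ≤ σ₁ + σ₂ := min_le_right _ _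
  have hm3 : min (M : ℤ) (σ₁ + σ₂) = M ∨ min (M : ℤ) (σ₁ + σ₂) = σ₁ + σ₂ := min_choice _ _
  generalize min (M : ℤ) (σ₁ + σ₂) = μ at *
  have hYM : (M : ℤ) ≤ Y * M := by
    have : (1 : ℤ) ≤ Y := by exact_mod_cast hY
    nlinarith
  have hMe : (0 : ℤ) ≤ M * exs ex s₁ := by positivity
  by_cases h3 : s₂.length ≤ 2
  · left
    refine ⟨h3, ?_⟩
    have k : (0 : ℤ) ≤ Y * (2 * (σ₁ + σ₂ + sg M s₁ + sg M s₂) - μ) := by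
      refine mul_nonneg (by positivity) ?_
      omega
    have : (8 * (Y : ℤ) + ex L.size + ex L'.size + exs ex s₂) * M ≤ N * M := by
      nlinarith
    have := le_of_mul_le_mul_right this (by omega)
    omega
  · right
    have hh := hh (by omega)
    have k : (0 : ℤ) ≤ Y * (2 * (σ₁ + σ₂ + sg M s₁) - μ + pre M s₂ - M) := by
      refine mul_nonneg (by positivity) ?_
      omega
    have k' : (N - 3 * Y - 1 - ex L.size - ex L'.size) * M ≤ N' * M :=
      mul_le_mul_of_nonneg_right hN' (by positivity)
    nlinarith

/-- A spine can be drawn in a strip as soon as its light subtrees and its short pieces can. -/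
theorem spine_main {M X Y : ℕ} (hX : 1 ≤ X) (hY : 1 ≤ Y) (hM : 1 ≤ M) (ex : ℕ → ℕ)
    (hC : ∀ s : Spine, 2 ≤ s.length → wt s ≤ M → LRC X Y s) :
    ∀ (n : ℕ) (s : Spine) (m : Bool) (lo hi : ℤ), s.length = n → (m = true → s ≠ []) →
      (∀ i ∈ s, LRT X (Y + ex i.2.size) i.2) → Req M Y ex s (hi + 1 - lo) →
      SpineDrawn X m lo hi s := by
  intro n
  induction n using Nat.strong_induction_on with
  | _ n IH =>
  intro s m lo hi hn hm hL hreq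
  have hge := hreq.ge hM
  match s, hn, hm, hL, hreq, hge with
  | [], hn, hm, hL, hreq, hge =>
    cases m
    · exact spine_nil X lo hi
    · exact absurd rfl (hm rfl)
  | [(b, L)], hn, hm, hL, hreq, hge =>
    have h1 := hL (b, L) (by simp)
    simp only [exs] at hge
    cases m
    · exact spine_one h1 (by push_cast at *; omega)
    · exact spine_one' h1 (by push_cast at *; omega)
  | [(b, L), (b', L')], hn, hm, hL, hreq, hge =>
    have h1 := hL (b, L) (by simp)
    have h2 := hL (b', L') (by simp)
    simp only [exs] at hge h1 h2
    cases m
    · exact spine_two hX h1 h2 (by push_cast at *; omega)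
    · exact spine_two' h1 h2 (by push_cast at *; omega)
  | (b, L) :: (b', L') :: i :: s, hn, hm, hL, hreq, hge =>
    have h1 := hL (b, L) (by simp)
    have h2 := hL (b', L') (by simp)
    simp only at h1 h2
    obtain ⟨s₁, s₂, e, hne, hw, hmax⟩ := exists_chunk M (i :: s) (by simp)
    have hlen := congrArg List.length e
    simp only [List.length_cons, List.length_append] at hlen hn
    have hexs : exs ex ((b, L) :: (b', L') :: i :: s)
        = ex L.size + (ex L'.size + exs ex (i :: s)) := rfl
    rw [hexs] at hge
    push_cast at hge
    have hN := hreq.ge8 hM (by simp)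
    rw [hexs] at hN
    push_cast at hN
    by_cases h2len : 2 ≤ s₁.length
    · rw [e]
      refine spine_chunk hX h1 h2 (by push_cast; omega) (hC s₁ h2len hw)
        (by rintro rfl; simp at h2len) hne ?_
      refine IH s₂.length (by omega) s₂ m lo _ rfl (fun _ => hne)
        (fun k hk => hL k (by rw [e]; simp [hk])) ?_
      refine hreq.step hM hY (i := (b, L)) (j := (b', L')) (s₁ := s₁) (by rw [e]) hne
        (by push_cast; omega) fun h3 => ?_
      have hmax := hmax (by omega)
      rw [sg_of_wt hw]
      rcases s₂ with _ | ⟨⟨c, K⟩, _ | ⟨⟨c', K'⟩, s₂⟩⟩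
      · simp at h3
      · simp at h3
      · simp only [List.head?_cons, Option.elim_some, pre] at hmax ⊢
        omega
    · refine spine_direct hX h1 h2 (by push_cast; omega) ?_
      refine IH (mirS (i :: s)).length (by simp; omega) _ m lo _ rfl (fun _ => by simp [mirS])
        ?_ ?_
      · intro k hk
        simp only [mirS, List.mem_map] at hk
        obtain ⟨k', hk', rfl⟩ := hk
        simpa using (hL k' (by simp at hk' ⊢; tauto)).mirror
      · have hfin := hreq.step hM hY (i := (b, L)) (j := (b', L')) (s₁ := []) (s₂ := i :: s) rfl
          (by simp) (N' := hi - (Y + ex L.size : ℕ) - (Y + ex L'.size : ℕ) - 1 + 1 - lo)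
          (by push_cast; omega) fun h3 => ?_
        · unfold Req at hfin ⊢
          rwa [sg_mirS, exs_mirS, pre_mirS, length_mirS]
        · simp only [List.length_cons] at h3
          have hmax := hmax (by omega)
          rcases s₁ with _ | ⟨⟨c, K⟩, _ | ⟨⟨c', K'⟩, s₁⟩⟩
          · rw [List.nil_append] at e
            rw [e]
            rcases s₂ with _ | ⟨⟨c, K⟩, _ | ⟨⟨c', K'⟩, s₂⟩⟩
            · simp at hlen
            · simp only [List.length_cons, List.length_nil] at hlen; omega
            · simp only [List.head?_cons, Option.elim_some, pre, wt, sg] at hmax ⊢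
              omega
          · rw [e]
            rcases s₂ with _ | ⟨⟨c', K'⟩, s₂⟩
            · exact absurd rfl hne
            · simp only [List.head?_cons, Option.elim_some, pre, wt, sg, List.cons_append,
                List.nil_append] at hmax ⊢
              omega
          · simp at h2len

end TreeDraw

namespace TreeDraw
open DT

/-! ### Recursion on the size -/

/-- The heavy path of a tree: it always continues into a larger subtree. -/
def spine : BT → Spine
  | BT.nil => []
  | BT.node l r => if l.size ≤ r.size then (true, l) :: spine r else (false, r) :: spine l

lemma plugS_spine (T : BT) : plugS (spine T) BT.nil = T := by
  induction T with
  | nil => rfl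
  | node l r hl hr => unfold spine; split <;> simp [plugS, hl, hr]

lemma wt_spine (T : BT) : wt (spine T) = T.size := by
  induction T with
  | nil => rfl
  | node l r hl hr => unfold spine; split <;> simp [wt, hl, hr, BT.size] <;> omega

lemma light_spine {T : BT} : ∀ i ∈ spine T, 2 * i.2.size + 1 ≤ T.size := by
  induction T with
  | nil => simp [spine]
  | node l r hl hr =>
    intro i hi
    unfold spine at hi
    simp only [BT.size]
    split at hi <;> rcases List.mem_cons.1 hi with rfl | hi
    · simp only; omega
    · have := hr i hi; omega
    · simp only; omega
    · have := hl i hi; omega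

lemma size_le_wt {s : Spine} : ∀ i ∈ s, i.2.size ≤ wt s := by
  induction s with
  | nil => simp
  | cons a s ih =>
    intro i hi
    obtain ⟨b, L⟩ := a
    simp only [wt]
    rcases List.mem_cons.1 hi with rfl | hi
    · simp only; omega
    · have := ih i hi; omega

/-- All trees with at most `M` nodes, and all spines with at most `M` nodes and at least two path
nodes, can be drawn in width `X` and height `Y`; the spines also in every larger width. -/
def Dr (M X Y : ℕ) : Prop :=
  (∀ T : BT, T.size ≤ M → LRT X Y T) ∧
    ∀ s : Spine, 2 ≤ s.length → wt s ≤ M → ∀ X', X ≤ X' → LRC X' Y s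

lemma Dr.mono {M X Y M' X' Y' : ℕ} (h : Dr M X Y) (hM : M' ≤ M) (hX : X ≤ X') (hY : Y ≤ Y') :
    Dr M' X' Y' :=
  ⟨fun T hT => (h.1 T (hT.trans hM)).mono hX hY,
    fun s hs hw Z hZ => (h.2 s hs (hw.trans hM) Z (hX.trans hZ)).mono hY⟩

lemma lrt_nil (X Y : ℕ) : LRT X Y BT.nil :=
  ⟨nil, rfl, by simp [verts], by simp [rt], fun _ _ => ⟨trivial, trivial⟩⟩

lemma Dr_one : Dr 1 1 1 := by
  constructor
  · intro T hT
    match T, hT with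
    | BT.nil, _ => exact lrt_nil 1 1
    | BT.node l r, hT =>
      simp only [BT.size] at hT
      have hl : l = BT.nil := by cases l with
        | nil => rfl
        | node a b => simp only [BT.size] at hT; omega
      have hr : r = BT.nil := by cases r with
        | nil => rfl
        | node a b => simp only [BT.size] at hT; omega
      subst hl; subst hr
      refine ⟨leaf (0, 0), rfl, ?_, by simp [rt_leaf], fun q hq => ⟨⟨?_, trivial, trivial,
        by simp [supp], by simp [supp], by simp [supp]⟩, by simp [rt], trivial, trivial⟩⟩
      · have := mem_box (x₀ := 0) (x₁ := 0) (y₀ := 0) (y₁ := 0) (i := 0) (j := 0) le_rfl le_rfl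
          le_rfl le_rfl
        simpa [leaf, verts] using this
      · rintro rfl; simp at hq
  · intro s hs hw
    exfalso
    match s, hs, hw with
    | a :: b :: s, _, hw =>
      obtain ⟨_, L⟩ := a; obtain ⟨_, L'⟩ := b
      simp only [wt] at hw; omega

/-- The height allotted to a tree with `n` nodes. -/
def ht (M Y n : ℕ) : ℕ := if n ≤ M then Y else Y * (24 * n - 7 * M) / M

/-- The height beyond `Y` allotted to a tree with `n` nodes. -/
def exh (M Y n : ℕ) : ℕ := ht M Y n - Y

variable {M X Y : ℕ}

lemma le_ht (hM : 1 ≤ M) (n : ℕ) : Y ≤ ht M Y n := by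
  unfold ht
  split
  · exact le_rfl
  · rw [Nat.le_div_iff_mul_le hM]
    exact Nat.mul_le_mul_left _ (by omega)

lemma add_exh (hM : 1 ≤ M) (n : ℕ) : Y + exh M Y n = ht M Y n := by
  have := le_ht (Y := Y) hM n
  unfold exh; omega

lemma exh_small {n : ℕ} (h : n ≤ M) : exh M Y n = 0 := by
  simp [exh, ht, h]

lemma exh_big (hM : 1 ≤ M) {n : ℕ} (h : M < n) : M * exh M Y n + 8 * (Y * M) ≤ 24 * (Y * n) := by
  have h1 : ht M Y n * M ≤ Y * (24 * n - 7 * M) := by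
    rw [ht, if_neg (by omega)]; exact Nat.div_mul_le_self _ _
  have h2 := add_exh (Y := Y) hM n
  rw [← h2] at h1
  zify [(by omega : 7 * M ≤ 24 * n)] at h1 ⊢
  nlinarith

/-- Cost of the light subtrees of a spine. -/
def Qs (M Y : ℕ) (s : Spine) : ℕ := 8 * (Y * sg M s) + M * exs (exh M Y) s

lemma Qs_cons (b : Bool) (L : BT) (s : Spine) : Qs M Y ((b, L) :: s) =
    8 * (Y * min M (L.size + 1)) + M * exh M Y L.size + Qs M Y s := by
  simp only [Qs, sg, exs]; ring

lemma Qs_small {s : Spine} (h : wt s ≤ M) : Qs M Y s ≤ 8 * (Y * wt s) := by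
  induction s with
  | nil => simp [Qs, sg, exs]
  | cons i s ih =>
    obtain ⟨b, L⟩ := i
    simp only [wt] at h ⊢
    have := ih (by omega)
    rw [Qs_cons, exh_small (by omega)]
    have h2 : Y * min M (L.size + 1) ≤ Y * (L.size + 1) := Nat.mul_le_mul_left _ (min_le_right _ _)
    nlinarith

lemma Qs_le (hM : 1 ≤ M) (s : Spine) : Qs M Y s ≤ 24 * (Y * wt s) := by
  induction s with
  | nil => simp [Qs, sg, exs]
  | cons i s ih =>
    obtain ⟨b, L⟩ := i
    simp only [wt]
    rw [Qs_cons]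
    by_cases h : L.size ≤ M
    · rw [exh_small h]
      have h2 : Y * min M (L.size + 1) ≤ Y * (L.size + 1) :=
        Nat.mul_le_mul_left _ (min_le_right _ _)
      nlinarith
    · have h1 := exh_big (Y := Y) hM (not_le.1 h)
      have h2 : Y * min M (L.size + 1) ≤ Y * M := Nat.mul_le_mul_left _ (min_le_left _ _)
      nlinarith

/-- Along a heavy path, the costs of the large light subtrees leave room for one more unit of
`16 Y M`: this is what makes the allotted heights linear. -/
lemma Qs_spine (hM : 1 ≤ M) (T : BT) (hT : M < T.size) :
    Qs M Y (spine T) + 16 * (Y * M) ≤ 24 * (Y * T.size) := by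
  have key : ∀ (b : Bool) (L H : BT), L.size ≤ H.size → M < L.size + H.size + 1 →
      (M < H.size → Qs M Y (spine H) + 16 * (Y * M) ≤ 24 * (Y * H.size)) →
      Qs M Y ((b, L) :: spine H) + 16 * (Y * M) ≤ 24 * (Y * (L.size + H.size + 1)) := by
    intro b L H hLH hn ih
    rw [Qs_cons]
    have h1 : Y * min M (L.size + 1) ≤ Y * (L.size + 1) := Nat.mul_le_mul_left _ (min_le_right _ _)
    have h2 : Y * min M (L.size + 1) ≤ Y * M := Nat.mul_le_mul_left _ (min_le_left _ _)
    have h3 : Y * M ≤ Y * (L.size + H.size + 1) := Nat.mul_le_mul_left _ hn.le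
    by_cases hH : M < H.size
    · have := ih hH
      by_cases hL : M < L.size
      · have := exh_big (Y := Y) hM hL
        nlinarith
      · rw [exh_small (not_lt.1 hL)]
        nlinarith
    · have h4 := Qs_small (Y := Y) (s := spine H) (M := M) (by rw [wt_spine]; omega)
      rw [wt_spine] at h4
      rw [exh_small (by omega)]
      nlinarith
  induction T with
  | nil => simp [BT.size] at hT
  | node l r hl hr =>
    simp only [BT.size] at hT ⊢
    unfold spine
    split
    · exact key true l r (by assumption) hT hr
    · have := key false r l (by omega) (by omega) hl
      rwa [add_comm r.size] at this

lemma req_of_Qs {s : Spine} {N : ℕ} (h : Qs M Y s + 8 * (Y * M) ≤ N * M) :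
    Req M Y (exh M Y) s N := by
  right
  have h1 : (0 : ℤ) ≤ Y * pre M s := by positivity
  have h2 : (8 * (Y * sg M s) + M * exs (exh M Y) s + 8 * (Y * M) : ℤ) ≤ N * M := by
    exact_mod_cast h
  nlinarith

/-- Forgetting the points outside the strip: trees in the horizontal orientation. -/
lemma lrt_of_spineDrawn {N : ℕ} {T : BT} (h : SpineDrawn X false 0 (N - 1) (spine T)) :
    LRT (X + 2) N T := by
  obtain ⟨c, e, k, _, i⟩ := h
  have hi := i nil (Or.inl ⟨rfl, rfl⟩)
  have hv : (c.plug nil).verts ⊆ box 0 (X + 1) 0 (N - 1) := by simpa [DC.verts] using k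
  refine ⟨c.plug nil, ?_, hv.trans (box_mono le_rfl (by push_cast; omega) le_rfl le_rfl), hi.1,
    fun q hq => hi.left (fun p hp => by simpa using (box_bounds (hv hp)).1) q hq⟩
  rw [shape_plug, e]
  exact plugS_spine T

/-- Every halving of the number of nodes costs only two columns. -/
lemma lrt_ht (hX : 1 ≤ X) (hY : 1 ≤ Y) (hM : 1 ≤ M) (hD : Dr M X Y) (j : ℕ) :
    ∀ T : BT, T.size ≤ 2 ^ j * M → LRT (X + 2 * j) (ht M Y T.size) T := by
  induction j with
  | zero =>
    intro T hT
    exact (hD.1 T (by simpa using hT)).mono (by omega) (le_ht hM _)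
  | succ j ih =>
    intro T hT
    by_cases hs : T.size ≤ M
    · exact (hD.1 T hs).mono (by omega) (le_ht hM _)
    refine LRT.mono (X := X + 2 * j + 2) (lrt_of_spineDrawn ?_) (by omega) le_rfl
    refine spine_main (M := M) (Y := Y) (by omega) hY hM (exh M Y)
      (fun s h1 h2 => hD.2 s h1 h2 _ (by omega)) _ _ _ _ _ rfl (by simp) ?_ ?_
    · intro i hi
      rw [add_exh hM]
      refine ih _ ?_
      have := light_spine i hi
      rw [pow_succ] at hT
      nlinarith
    · have := req_of_Qs (M := M) (Y := Y) (s := spine T) (N := ht M Y T.size) ?_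
      · simpa using this
      have h1 := Qs_spine (Y := Y) hM T (not_le.1 hs)
      have h2 : Y * (24 * T.size - 7 * M) < (ht M Y T.size + 1) * M := by
        rw [ht, if_neg hs, ← Nat.div_lt_iff_lt_mul hM]
        exact Nat.lt_succ_self _
      zify [(by omega : 7 * M ≤ 24 * T.size)] at h1 h2 ⊢
      have : (M : ℤ) ≤ Y * M := by
        have : (1 : ℤ) ≤ Y := by exact_mod_cast hY
        nlinarith
      nlinarith

/-- A drawn spine or tree that can be entered from everywhere above. -/
def TopDrawn (X : ℕ) (m : Bool) (top : ℤ) (s : Spine) : Prop :=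
  ∃ c : DC, c.shape = s ∧
    c.verts ⊆ box (-(if m then X else 0 : ℤ)) (X + 1 + (if m then X else 0 : ℤ)) 0 top ∧
    (m = true → ∀ q, (c.last q).2 = 0) ∧ (∀ p ∈ (c.plug nil).rt, p.2 = top) ∧
    ∀ t, Tail m 0 t → ∀ q : Pt, top < q.2 → Good q (c.plug t) ∧ Ord q (c.plug t)

/-- The first node is put on top of the strip with its light subtree below it, so that it can be
entered from everywhere above. -/
lemma topDrawn_false {m : Bool} {top : ℤ} {s : Spine} {L : BT} {m₁ : ℕ} (hL : LRT X m₁ L)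
    (h0 : (m₁ : ℤ) ≤ top) (hs : SpineDrawn X m 0 (top - m₁ - 1) s) :
    TopDrawn X m top ((false, L) :: s) := by
  obtain ⟨D, e₁, k₁, l₁⟩ := hL.placeL (top - m₁)
  obtain ⟨c, e, k, l, i⟩ := hs
  have hX : 0 ≤ (if m then X else 0 : ℤ) := by split <;> simp
  refine ⟨(false, (0, top), D) :: c, ?_, ?_, ?_, by simp [DC.plug], ?_⟩
  · simp only [DC.shape, List.map_cons, e₁] at e ⊢; rw [e]
  · rw [verts_cons]
    refine Set.union_subset (Set.union_subset ?_ (k₁.trans (box_mono (by omega) (by omega)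
      (by omega) (by omega)))) (k.trans (box_mono le_rfl le_rfl le_rfl (by omega)))
    rw [Set.singleton_subset_iff]
    simpa using mem_box (i := 0) (j := top) (by omega : -(if m then X else 0 : ℤ) ≤ 0)
      (by omega : (0 : ℤ) ≤ X + 1 + (if m then X else 0 : ℤ)) (by omega : 0 ≤ top) le_rfl
  · intro h q
    have := l h ((0, (top : ℝ)) : Pt)
    simpa [DC.last] using this
  · intro t ht q hq
    refine topWrap rfl l₁ ?_ ?_ ?_ (i t ht) q hq <;> push_cast <;> linarith

lemma TopDrawn.mirror {m : Bool} {top : ℤ} {s : Spine} (h : TopDrawn X m top s) :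
    TopDrawn X m top (mirS s) := by
  obtain ⟨c, e, k, l, r, i⟩ := h
  set g : Aff := ⟨-1, 0, 0, 1, X + 1, 0⟩ with hg
  have hinv : ∀ q : Pt, g.ap (X + 1 - q.1, q.2) = q := by
    intro q; ext <;> simp [Aff.ap, hg]
  refine ⟨c.tr true g, by rw [DC.shape_tr_true, e], ?_, ?_, ?_, ?_⟩
  · rw [DC.verts_tr]
    rintro _ ⟨p, hp, rfl⟩
    obtain ⟨x, y, rfl, _, _, _, _⟩ := k hp
    refine ⟨X + 1 - x, y, ?_, by omega, by omega, by omega, by omega⟩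
    ext <;> simp [Aff.ap, hg]; ring
  · intro hm q
    rw [← hinv q, DC.last_tr]
    simp [Aff.ap, hg, l hm]
  · have : (c.tr true g).plug nil = (c.plug nil).tr true g := (DC.tr_plug c nil).symm
    rw [this, rt_tr]
    rintro _ ⟨p, hp, rfl⟩
    simp [Aff.ap, hg, r p hp]
  · intro t ht q hq
    obtain ⟨t', ht', rfl⟩ : ∃ t', Tail m 0 t' ∧ t = t'.tr true g := by
      rcases ht with ⟨hm, rfl⟩ | ⟨hm, z, rfl, hz⟩
      · exact ⟨nil, Or.inl ⟨hm, rfl⟩, rfl⟩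
      · exact ⟨leaf (X + 1 - z.1, z.2), Or.inr ⟨hm, _, rfl, hz⟩, by rw [tr_leaf, hinv]⟩
    rw [← DC.tr_plug]
    exact tr_goodord (by simp [hg, Aff.Det]) _ (hinv q) (i t' ht' _ hq)

/-- Every sufficiently high strip suffices for a spine whose light subtrees are all of moderate
size. -/
lemma topDrawn (hX : 1 ≤ X) (hY : 1 ≤ Y) (hM : 1 ≤ M) (hD : Dr M X Y) {t k : ℕ} (h1t : 1 ≤ t)
    (htk : t ≤ 2 ^ k) {m : Bool} {s : Spine} (hs : s ≠ []) (hm : m = true → 2 ≤ s.length)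
    (hw : wt s ≤ t * M) {Z : ℕ} (hZ : 60 * Y * t ≤ Z) :
    TopDrawn (X + 2 * k) m (Z - 1) s := by
  have hYt : 1 ≤ Y * t := Nat.mul_pos hY h1t
  have main : ∀ (L : BT) (s : Spine), (m = true → s ≠ []) → wt ((false, L) :: s) ≤ t * M →
      TopDrawn (X + 2 * k) m (Z - 1) ((false, L) :: s) := by
    intro L s hne hw
    simp only [wt] at hw
    have hlight : ∀ K : BT, K.size ≤ t * M → LRT (X + 2 * k) (ht M Y K.size) K := fun K hK =>
      lrt_ht hX hY hM hD k K (hK.trans (Nat.mul_le_mul_right _ htk))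
    have hLs : ht M Y L.size ≤ 24 * (Y * t) := by
      unfold ht
      split
      · nlinarith
      · have h1 : Y * (24 * L.size - 7 * M) ≤ Y * (24 * (t * M)) :=
          Nat.mul_le_mul_left _ (by omega)
        have h2 : Y * (24 * (t * M)) = M * (24 * (Y * t)) := by ring
        exact Nat.div_le_of_le_mul (h1.trans h2.le)
    refine topDrawn_false (hlight L (by omega)) (by
      have : 60 * (Y * t) ≤ Z := by rw [← mul_assoc]; exact hZ
      omega) ?_
    refine spine_main (M := M) (Y := Y) (by omega) hY hM (exh M Y)
      (fun s h1 h2 => hD.2 s h1 h2 _ (by omega)) _ _ _ _ _ rfl hne ?_ ?_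
    · intro i hi
      rw [add_exh hM]
      exact hlight _ ((size_le_wt i hi).trans (by omega))
    · have h60 : 60 * (Y * t) ≤ Z := by rw [← mul_assoc]; exact hZ
      have := req_of_Qs (M := M) (Y := Y) (s := s) (N := Z - 1 - ht M Y L.size) ?_
      · have e : (Z : ℤ) - 1 - (ht M Y L.size : ℕ) - 1 + 1 - 0
            = ((Z - 1 - ht M Y L.size : ℕ) : ℤ) := by omega
        rw [e]; exact this
      have h1 := Qs_le (Y := Y) hM s
      have h2 : 32 * (Y * t) ≤ Z - 1 - ht M Y L.size := by omega
      have h3 := Nat.mul_le_mul_right M h2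
      have h4 : Y * wt s ≤ Y * (t * M) := Nat.mul_le_mul_left _ (by omega)
      have h5 : Y * M ≤ Y * t * M := by
        refine Nat.mul_le_mul_right _ ?_
        nlinarith
      nlinarith
  match s, hs, hm, hw with
  | (false, L) :: s, _, hm, hw =>
    refine main L s ?_ hw
    rintro h rfl
    simpa using hm h
  | (true, L) :: s, _, hm, hw =>
    have := main L.mirror (mirS s) ?_ ?_
    · have e : mirS ((false, L.mirror) :: mirS s) = (true, L) :: s := by
        change (!false, L.mirror.mirror) :: mirS (mirS s) = _
        simp
      exact e ▸ this.mirror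
    · intro h e
      have e' := congrArg List.length e
      have := hm h
      simp at e' this
      subst e'
      simp at this
    · have := wt_mirS ((true, L) :: s)
      simp only [mirS, List.map_cons] at this
      exact this.le.trans hw

/-- Quarter turn of a tree. -/
lemma TopDrawn.lrt {Z : ℕ} {T : BT} (h : TopDrawn X false (Z - 1) (spine T)) :
    LRT Z (X + 2) T := by
  obtain ⟨c, e, k, _, r, i⟩ := h
  set g : Aff := ⟨0, -1, 1, 0, (Z - 1 : ℤ), 0⟩ with hg
  have hinv : ∀ q : Pt, g.ap (q.2, (Z - 1 : ℤ) - q.1) = q := by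
    intro q; ext <;> simp [Aff.ap, hg]
  have hsh : (c.plug nil).shape = T := by rw [shape_plug, e]; exact plugS_spine T
  refine ⟨(c.plug nil).tr false g, by rw [shape_tr_false, hsh], ?_, ?_, ?_⟩
  · rw [verts_tr]
    rintro _ ⟨p, hp, rfl⟩
    obtain ⟨x, y, rfl, _, _, _, _⟩ := k hp
    simp at *
    refine ⟨Z - 1 - y, x, ?_, by omega, by omega, by omega, by omega⟩
    ext <;> simp [Aff.ap, hg]; ring
  · rw [rt_tr]
    rintro _ ⟨p, hp, rfl⟩
    simp [Aff.ap, hg, r p hp]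
  · intro q hq
    exact tr_goodord (by simp [hg, Aff.Det]) _ (hinv q) (i nil (Or.inl ⟨rfl, rfl⟩) _
      (by simp only; linarith))

/-- Quarter turn of a spine. -/
lemma TopDrawn.lrc {Z : ℕ} {s : Spine} (h : TopDrawn X true (Z - 1) s) :
    LRC Z (3 * X + 2) s := by
  obtain ⟨c, e, k, l, r, i⟩ := h
  set g : Aff := ⟨0, -1, 1, 0, (Z - 1 : ℤ), X⟩ with hg
  have hinv : ∀ q : Pt, g.ap (q.2 - X, (Z - 1 : ℤ) - q.1) = q := by
    intro q; ext <;> simp [Aff.ap, hg]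
  refine ⟨c.tr false g, by rw [DC.shape_tr_false, e], ?_, ?_, ?_, ?_⟩
  · rw [DC.verts_tr]
    rintro _ ⟨p, hp, rfl⟩
    obtain ⟨x, y, rfl, _, _, _, _⟩ := k hp
    simp only [if_true] at *
    refine ⟨Z - 1 - y, x + X, ?_, by omega, by omega, by omega, by push_cast; omega⟩
    ext <;> simp [Aff.ap, hg]; ring
  · have : (c.tr false g).plug nil = (c.plug nil).tr false g := (DC.tr_plug c nil).symm
    rw [this, rt_tr]
    rintro _ ⟨p, hp, rfl⟩
    simp [Aff.ap, hg, r p hp]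
  · intro q
    rw [← hinv q, DC.last_tr]
    simp [Aff.ap, hg, l rfl]
  · intro q z hq hz
    have e : leaf z = (leaf (z.2 - X, (Z - 1 : ℤ) - z.1)).tr false g := by
      rw [tr_leaf, hinv]
    rw [e, ← DC.tr_plug]
    refine tr_goodord (by simp [hg, Aff.Det]) _ (hinv q) (i _ (Or.inr ⟨rfl, _, rfl, ?_⟩) _ ?_)
    · push_cast; linarith
    · simp only; linarith

/-- One round of the construction. -/
lemma Dr.assemble (hX : 1 ≤ X) (hY : 1 ≤ Y) (hM : 1 ≤ M) (hD : Dr M X Y) {t k : ℕ} (ht : 1 ≤ t)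
    (htk : t ≤ 2 ^ k) : Dr (t * M) (60 * Y * t) (5 * X + 6 * k) := by
  constructor
  · intro T hT
    by_cases h : T = BT.nil
    · subst h; exact lrt_nil _ _
    refine (TopDrawn.lrt (topDrawn hX hY hM hD ht htk ?_ (by simp) (by rwa [wt_spine])
      le_rfl)).mono le_rfl (by omega)
    intro e
    have := wt_spine T
    rw [e] at this
    cases T with
    | nil => exact h rfl
    | node l r => simp [wt, BT.size] at this
  · intro s hs hw Z hZ
    exact (TopDrawn.lrc (topDrawn hX hY hM hD ht htk (by rintro rfl; simp at hs) (fun _ => hs) hw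
      hZ)).mono (by omega)

/-- The tower function. -/
def tower : ℕ → ℕ
  | 0 => 1
  | j + 1 => 2 ^ tower j

lemma tower_pos (j : ℕ) : 1 ≤ tower j := by
  cases j with
  | zero => exact le_rfl
  | succ j => exact Nat.one_le_two_pow

/-- Two rounds turn drawings in squares of side `κ ℓ` into drawings in squares of side
`660 κ t ℓ` for any `t ≤ 2 ^ ℓ`. -/
lemma Dr.square {l κ t : ℕ} (hl : 1 ≤ l) (hκ : 1 ≤ κ) (h : Dr (l ^ 2) (κ * l) (κ * l)) (ht : 1 ≤ t)
    (htl : t ≤ 2 ^ l) : Dr ((t * l) ^ 2) (660 * (κ * (t * l))) (660 * (κ * (t * l))) := by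
  have hκl : l ≤ κ * l := Nat.le_mul_of_pos_left _ hκ
  have h1 : 1 ≤ κ * l := hl.trans hκl
  have a := h.assemble h1 h1 (Nat.one_le_pow _ _ hl) ht htl
  have a' := a.mono (Y' := 11 * (κ * l)) le_rfl le_rfl (by omega)
  have h2 : 1 ≤ 60 * (κ * l) * t := Nat.mul_pos (Nat.mul_pos (by norm_num) h1) ht
  have b := a'.assemble h2 (by omega) (Nat.mul_pos ht (Nat.pow_pos hl)) ht htl
  have h3 : κ * l ≤ κ * l * t := Nat.le_mul_of_pos_right _ ht
  refine b.mono (by apply le_of_eq; ring) (by apply le_of_eq; ring) ?_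
  have e1 : 660 * (κ * (t * l)) = 660 * (κ * l * t) := by ring
  have e2 : 60 * (κ * l) * t = 60 * (κ * l * t) := by ring
  rw [e1, e2]
  omega

/-- Iterating `Dr.square` with `ℓ = tower j`: each level of the tower costs a factor
`1320 = 2 · 660` in the side, the `2` coming from rounding `s` up to a multiple of `ℓ`. -/
theorem Dr_tower (j : ℕ) : ∀ s : ℕ, 1 ≤ s → s ≤ tower j →
    Dr (s ^ 2) (1320 ^ j * s) (1320 ^ j * s) := by
  induction j with
  | zero =>
    intro s h1 h2
    obtain rfl : s = 1 := le_antisymm h2 h1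
    simpa using Dr_one
  | succ j ih =>
    intro s h1 h2
    have hp : 1320 ^ j * s ≤ 1320 ^ (j + 1) * s :=
      Nat.mul_le_mul_right _ (Nat.pow_le_pow_right (by norm_num) (Nat.le_succ _))
    by_cases h : s ≤ tower j
    · exact (ih s h1 h).mono le_rfl hp hp
    have hl := tower_pos j
    change s ≤ 2 ^ tower j at h2
    generalize tower j = l at *
    have hd := Nat.div_add_mod (s - 1) l
    have hr := Nat.mod_lt (s - 1) hl
    have hdiv : (s - 1) / l + 1 ≤ s := by
      have := Nat.div_le_self (s - 1) l
      omega
    have hmul : ((s - 1) / l + 1) * l = l * ((s - 1) / l) + l := by ring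
    have b := (ih l hl le_rfl).square hl (Nat.one_le_pow _ _ (by norm_num))
      (Nat.succ_pos ((s - 1) / l)) (hdiv.trans h2)
    generalize ((s - 1) / l + 1) * l = u at *
    have hle : 660 * (1320 ^ j * u) ≤ 1320 ^ (j + 1) * s := by
      have : u ≤ 2 * s := by omega
      calc 660 * (1320 ^ j * u) ≤ 660 * (1320 ^ j * (2 * s)) := by gcongr
        _ = 1320 ^ (j + 1) * s := by ring
    exact b.mono (Nat.pow_le_pow_left (by omega) 2) hle hle

end TreeDraw

namespace TreeDraw
open DT

/-! ### From cross products to angles -/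

/-- Polar coordinates of `d` relative to the direction `d₀`. -/
lemma ccwAngle_polar {d₀ : Pt} (h : d₀ ≠ 0) (d : Pt) : ∃ ρ : ℝ, 0 ≤ ρ ∧
    0 ≤ ccwAngle d₀ d ∧ ccwAngle d₀ d < 2 * Real.pi ∧
    d.1 = ρ * (d₀.1 * Real.cos (ccwAngle d₀ d) - d₀.2 * Real.sin (ccwAngle d₀ d)) ∧
    d.2 = ρ * (d₀.1 * Real.sin (ccwAngle d₀ d) + d₀.2 * Real.cos (ccwAngle d₀ d)) := by
  set w : ℂ := ⟨d₀.1, d₀.2⟩ with hw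
  set z : ℂ := ⟨d.1, d.2⟩ with hz
  have hw0 : w ≠ 0 := by
    intro e
    rw [Complex.ext_iff] at e
    exact h (Prod.ext e.1 e.2)
  have hθ : ccwAngle d₀ d = if (z / w).arg < 0 then (z / w).arg + 2 * Real.pi
    else (z / w).arg := rfl
  generalize ccwAngle d₀ d = θ at *
  have hcos : Real.cos θ = Real.cos (z / w).arg := by
    rw [hθ]; split
    · exact Real.cos_add_two_pi _
    · rfl
  have hsin : Real.sin θ = Real.sin (z / w).arg := by
    rw [hθ]; split
    · exact Real.sin_add_two_pi _
    · rfl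
  have h1 := Complex.neg_pi_lt_arg (z / w)
  have h2 := Complex.arg_le_pi (z / w)
  have hπ := Real.pi_pos
  have e : z = w * (z / w) := by field_simp
  have e1 : (z / w).re = ‖z / w‖ * Real.cos θ := by rw [hcos, Complex.norm_mul_cos_arg]
  have e2 : (z / w).im = ‖z / w‖ * Real.sin θ := by rw [hsin, Complex.norm_mul_sin_arg]
  refine ⟨‖z / w‖, norm_nonneg _, ?_, ?_, ?_, ?_⟩
  · rw [hθ]; split <;> linarith
  · rw [hθ]; split <;> linarith
  · have : z.re = w.re * (z / w).re - w.im * (z / w).im := by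
      conv_lhs => rw [e, Complex.mul_re]
    rw [e1, e2] at this
    change z.re = ‖z / w‖ * (w.re * Real.cos θ - w.im * Real.sin θ)
    linarith
  · have : z.im = w.re * (z / w).im + w.im * (z / w).re := by
      conv_lhs => rw [e, Complex.mul_im]
    rw [e1, e2] at this
    change z.im = ‖z / w‖ * (w.re * Real.sin θ + w.im * Real.cos θ)
    linarith

lemma ccwAngle_lt {d₀ d₁ d₂ : Pt} (h : Ccw d₀ d₁ d₂) : ccwAngle d₀ d₁ < ccwAngle d₀ d₂ := by
  have h0 : d₀ ≠ 0 := by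
    rintro rfl
    simp [Ccw, cr] at h
  obtain ⟨ρ₁, p₁, a₁, b₁, x₁, y₁⟩ := ccwAngle_polar h0 d₁
  obtain ⟨ρ₂, p₂, a₂, b₂, x₂, y₂⟩ := ccwAngle_polar h0 d₂
  generalize ccwAngle d₀ d₁ = α at *
  generalize ccwAngle d₀ d₂ = β at *
  have hN : 0 ≤ d₀.1 ^ 2 + d₀.2 ^ 2 := by positivity
  have c1 : cr d₀ d₁ = ρ₁ * (d₀.1 ^ 2 + d₀.2 ^ 2) * Real.sin α := by
    rw [cr, x₁, y₁]; ring
  have c2 : cr d₂ d₀ = ρ₂ * (d₀.1 ^ 2 + d₀.2 ^ 2) * -Real.sin β := by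
    rw [cr, x₂, y₂]; ring
  have c3 : cr d₁ d₂ = ρ₁ * ρ₂ * (d₀.1 ^ 2 + d₀.2 ^ 2) * Real.sin (β - α) := by
    rw [cr, x₁, y₁, x₂, y₂, Real.sin_sub]; ring
  have s1 : 0 < cr d₀ d₁ → α < Real.pi := fun hc => by
    by_contra! hα
    have : Real.sin (α - Real.pi) ≥ 0 :=
      Real.sin_nonneg_of_nonneg_of_le_pi (by linarith) (by linarith)
    rw [Real.sin_sub_pi] at this
    rw [c1] at hc
    nlinarith [mul_nonneg p₁ hN]
  have s2 : 0 < cr d₂ d₀ → Real.pi < β := fun hc => by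
    by_contra! hβ
    have := Real.sin_nonneg_of_nonneg_of_le_pi a₂ hβ
    rw [c2] at hc
    nlinarith [mul_nonneg p₂ hN]
  have s3 : 0 < cr d₁ d₂ → α < Real.pi ∨ Real.pi < β → α < β := fun hc hd => by
    by_contra! hβ
    have : 0 ≤ Real.sin (α - β) :=
      Real.sin_nonneg_of_nonneg_of_le_pi (by linarith) (by rcases hd with hd | hd <;> linarith)
    rw [← neg_sub α β, Real.sin_neg] at c3
    rw [c3] at hc
    nlinarith [mul_nonneg (mul_nonneg p₁ p₂) hN]
  rcases h with ⟨h, h'⟩ | ⟨h, h'⟩ | ⟨h, h'⟩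
  · exact s3 h' (Or.inl (s1 h))
  · exact s3 h (Or.inr (s2 h'))
  · exact (s1 h').trans (s2 h)

/-! ### The iterated logarithm -/

/-- The tower function bounds the numbers with a given iterated logarithm. -/
lemma le_tower (j : ℕ) : ∀ x : ℝ, (Real.logb 2)^[j] x ≤ 1 → x ≤ tower j := by
  induction j with
  | zero => intro x h; simpa [tower] using h
  | succ j ih =>
    intro x h
    rw [Function.iterate_succ_apply] at h
    have h1 := ih _ h
    by_cases hx : x ≤ 0
    · exact hx.trans (Nat.cast_nonneg _)
    · rw [Real.logb_le_iff_le_rpow (by norm_num) (not_le.1 hx)] at h1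
      simpa [tower] using h1

/-- The set whose infimum defines `logStar` is nonempty. -/
lemma exists_iterate_le (m : ℕ) : ∀ x : ℝ, x ≤ m → ∃ j, (Real.logb 2)^[j] x ≤ 1 := by
  induction m with
  | zero => intro x hx; exact ⟨0, by simp at hx ⊢; linarith⟩
  | succ m ih =>
    intro x hx
    by_cases h1 : x ≤ 1
    · exact ⟨0, h1⟩
    push Not at h1
    suffices h : Real.logb 2 x ≤ m ∨ Real.logb 2 x ≤ 1 by
      rcases h with h | h
      · obtain ⟨j, hj⟩ := ih _ h
        exact ⟨j + 1, hj⟩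
      · exact ⟨1, h⟩
    by_cases h2 : x ≤ 2
    · right
      rw [Real.logb_le_iff_le_rpow (by norm_num) (by linarith)]
      simpa using h2
    · left
      push Not at h2
      push_cast at hx
      refine le_trans ?_ (by linarith : x - 1 ≤ m)
      rw [Real.logb_le_iff_le_rpow (by norm_num) (by linarith)]
      have := one_add_mul_self_le_rpow_one_add (s := 1) (by norm_num) (by linarith : 1 ≤ x - 1)
      norm_num at this
      exact this

lemma le_tower_logStar (n : ℕ) : n ≤ tower (logStar n) := by
  have : logStar n ∈ {j : ℕ | (Real.logb 2)^[j] (n : ℝ) ≤ 1} :=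
    Nat.sInf_mem (exists_iterate_le n n le_rfl)
  exact_mod_cast le_tower _ _ this

/-! ### The area bound -/

/-- Every ordered binary tree with at most `n` nodes can be drawn in a square of side `S`, where
`S ^ 2` is at most `n * 2 ^ (23 * log* n)`. -/
theorem square_bound {n : ℕ} (hn : 1 ≤ n) : ∃ S : ℕ, (∀ T : BT, T.size ≤ n → LRT S S T) ∧
    S * S ≤ n * 2 ^ (23 * logStar n) := by
  have ht := le_tower_logStar n
  rcases hn.eq_or_lt with rfl | hn
  · refine ⟨1, fun T hT => ?_, by simpa using Nat.one_le_two_pow⟩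
    have := (Dr_tower 0 1 le_rfl le_rfl).1 T (by simpa using hT)
    simpa using this
  generalize logStar n = j at *
  have hs1 := Nat.sqrt_le' n
  have hs2 := Nat.lt_succ_sqrt' n
  have hs3 := Nat.sqrt_lt_self hn
  have hj : 1 ≤ j := by
    by_contra hj
    obtain rfl : j = 0 := by omega
    simp only [tower] at ht
    omega
  refine ⟨1320 ^ j * (n.sqrt + 1), fun T hT => ?_, ?_⟩
  · exact (Dr_tower j (n.sqrt + 1) (by omega) (by omega)).1 T (hT.trans hs2.le)
  · have h1 : 1 ≤ n.sqrt := Nat.le_sqrt'.2 (by omega)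
    have h2 : (n.sqrt + 1) * (n.sqrt + 1) ≤ 4 * n := by nlinarith
    have h3 : (1320 ^ 2) ^ j ≤ (2 ^ 21) ^ j := Nat.pow_le_pow_left (by norm_num) j
    have h4 : 4 ≤ (2 ^ 2) ^ j := Nat.le_self_pow (by omega) 4
    calc 1320 ^ j * (n.sqrt + 1) * (1320 ^ j * (n.sqrt + 1))
        = (1320 ^ 2) ^ j * ((n.sqrt + 1) * (n.sqrt + 1)) := by rw [← pow_mul]; ring
      _ ≤ (2 ^ 21) ^ j * ((2 ^ 2) ^ j * n) :=
          Nat.mul_le_mul h3 (h2.trans (Nat.mul_le_mul_right _ h4))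
      _ = n * 2 ^ (23 * j) := by rw [pow_mul]; rw [← mul_assoc, ← mul_pow, mul_comm]; norm_num

end TreeDraw

namespace TreeDraw
open DT Relation

/-! ### From drawn trees to placements of the vertices -/

/-- The vertices of a rooted tree with parent relation `P` are placed at the nodes of a drawn binary
tree: the vertex `v` at `f v`, its parent (or the point to which the root is joined) at `pp v`, and
`S v` is the part of the drawing at and below `v`. -/
structure Placed {V : Type} (P : V → V → Prop) (r : V) (lab : V → Bool) (f pp : V → Pt)
    (S : V → DT) : Prop where
  par : ∀ u v, P u v → pp v = f u
  node : ∀ v, ∃ l₁ l₂, S v = DT.node (f v) l₁ l₂ ∧ ∀ w, P v w → S w = if lab w then l₂ else l₁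
  good : Good (pp r) (S r)
  ord : Ord (pp r) (S r)
  reach : ∀ v, ReflTransGen P r v
  inj : ∀ u v w, P u v → P u w → lab v = lab w → v = w
  uniq : ∀ u u' v, P u v → P u' v → u = u'

namespace Placed

variable {V : Type} {P : V → V → Prop} {r : V} {lab : V → Bool} {f pp : V → Pt} {S : V → DT}

lemma goodord (h : Placed P r lab f pp S) (v : V) : Good (pp v) (S v) ∧ Ord (pp v) (S v) := by
  induction h.reach v with
  | refl => exact ⟨h.good, h.ord⟩
  | @tail u w _ huw ih =>
    obtain ⟨l₁, l₂, e, hc⟩ := h.node u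
    rw [e] at ih
    rw [h.par _ _ huw, hc _ huw]
    obtain ⟨⟨_, g1, g2, _⟩, _, o1, o2⟩ := ih
    split
    · exact ⟨g2, o2⟩
    · exact ⟨g1, o1⟩

lemma ne (h : Placed P r lab f pp S) (v : V) : pp v ≠ f v := by
  obtain ⟨l₁, l₂, e, -⟩ := h.node v
  have := (h.goodord v).1
  rw [e] at this
  exact this.1

lemma edge_sub (h : Placed P r lab f pp S) (v : V) : segment ℝ (pp v) (f v) ⊆ supp (pp v) (S v) := by
  obtain ⟨l₁, l₂, e, -⟩ := h.node v
  rw [e]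
  exact Set.subset_union_left

/-- The edges at and below a descendant `w` of `v` are covered by the drawing at and below `v`. -/
lemma supp_sub (h : Placed P r lab f pp S) {v w : V} (hvw : ReflTransGen P v w) :
    supp (pp w) (S w) ⊆ supp (pp v) (S v) := by
  induction hvw with
  | refl => exact subset_rfl
  | @tail u w _ huw ih =>
    refine subset_trans ?_ ih
    obtain ⟨l₁, l₂, e, hc⟩ := h.node u
    rw [e, h.par _ _ huw, hc _ huw]
    refine subset_trans ?_ Set.subset_union_right
    split
    · exact Set.subset_union_right
    · exact Set.subset_union_left

lemma edge_child (h : Placed P r lab f pp S) {v w : V} (hvw : P v w) {x : Pt}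
    (hx : x ∈ segment ℝ (pp v) (f v)) (hx' : x ∈ supp (pp w) (S w)) : x = f v := by
  obtain ⟨l₁, l₂, e, hc⟩ := h.node v
  have hg := (h.goodord v).1
  rw [e] at hg
  rw [h.par _ _ hvw, hc _ hvw] at hx'
  split at hx'
  · exact hg.2.2.2.2.2 x hx hx'
  · exact hg.2.2.2.2.1 x hx hx'

lemma siblings (h : Placed P r lab f pp S) {v w w' : V} (hw : P v w) (hw' : P v w') (hne : w ≠ w')
    {x : Pt} (hx : x ∈ supp (pp w) (S w)) (hx' : x ∈ supp (pp w') (S w')) : x = f v := by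
  obtain ⟨l₁, l₂, e, hc⟩ := h.node v
  have hg := (h.goodord v).1
  rw [e] at hg
  rw [h.par _ _ hw, hc _ hw] at hx
  rw [h.par _ _ hw', hc _ hw'] at hx'
  have hl : lab w ≠ lab w' := fun e => hne (h.inj _ _ _ hw hw' e)
  cases e1 : lab w <;> cases e2 : lab w' <;> simp only [e1, e2] at hx hx' hl
  · exact absurd rfl hl
  · exact hg.2.2.2.1 x hx hx'
  · exact hg.2.2.2.1 x hx' hx
  · exact absurd rfl hl

/-- The parent edge of `a` meets the parent edge of a proper descendant `b` only at `f a`, and only if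
`b` is a child of `a`. -/
lemma cross_anc (h : Placed P r lab f pp S) {a b c : V} (hac : P a c) (hcb : ReflTransGen P c b)
    {x : Pt} (hx : x ∈ segment ℝ (pp a) (f a)) (hx' : x ∈ segment ℝ (pp b) (f b)) :
    x = f a ∧ b = c := by
  have e := h.edge_child hac hx (h.supp_sub hcb (h.edge_sub b hx'))
  refine ⟨e, ?_⟩
  rcases hcb.cases_head with rfl | ⟨c', hcc', hc'b⟩
  · rfl
  exfalso
  have hc : x = pp c := by rw [h.par _ _ hac, e]
  refine h.ne c (hc.symm.trans (h.edge_child hcc' ?_ (h.supp_sub hc'b (h.edge_sub b hx'))))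
  rw [hc]; exact left_mem_segment _ _ _

/-- Parent edges below different children of `m` meet only at `f m`, and only if they start there. -/
lemma cross_sib (h : Placed P r lab f pp S) {m a b c c' : V} (hc : P m c) (hc' : P m c')
    (hne : c ≠ c') (hca : ReflTransGen P c a) (hcb : ReflTransGen P c' b)
    {x : Pt} (hx : x ∈ segment ℝ (pp a) (f a)) (hx' : x ∈ segment ℝ (pp b) (f b)) :
    x = f m ∧ a = c := by
  have e := h.siblings hc hc' hne (h.supp_sub hca (h.edge_sub a hx))
    (h.supp_sub hcb (h.edge_sub b hx'))
  refine ⟨e, ?_⟩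
  rcases hca.cases_head with rfl | ⟨d, hcd, hda⟩
  · rfl
  exfalso
  have hxc : x = pp c := by rw [h.par _ _ hc, e]
  refine h.ne c (hxc.symm.trans (h.cross_anc hcd hda ?_ hx).1)
  rw [hxc]; exact left_mem_segment _ _ _

/-- Two vertices are comparable or lie below different children of a common ancestor. -/
lemma trichotomy (h : Placed P r lab f pp S) (a b : V) : ReflTransGen P a b ∨ ReflTransGen P b a ∨
    ∃ m c c', P m c ∧ P m c' ∧ c ≠ c' ∧ ReflTransGen P c a ∧ ReflTransGen P c' b := by
  induction h.reach a with
  | refl => exact Or.inl (h.reach b)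
  | @tail u a _ hua ih =>
    rcases ih with ih | ih | ⟨m, c, c', h1, h2, h3, h4, h5⟩
    · rcases ih.cases_head with rfl | ⟨c, huc, hcb⟩
      · exact Or.inr (Or.inl (ReflTransGen.single hua))
      · by_cases e : a = c
        · subst e; exact Or.inl hcb
        · exact Or.inr (Or.inr ⟨u, a, c, hua, huc, e, ReflTransGen.refl, hcb⟩)
    · exact Or.inr (Or.inl (ih.tail hua))
    · exact Or.inr (Or.inr ⟨m, c, c', h1, h2, h3, h4.tail hua, h5⟩)

/-- The parent edges of two vertices meet only in a common end. -/
lemma cross (h : Placed P r lab f pp S) {a b : V} (hab : a ≠ b)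
    {x : Pt} (hx : x ∈ segment ℝ (pp a) (f a)) (hx' : x ∈ segment ℝ (pp b) (f b)) :
    (P a b ∧ x = f a) ∨ (P b a ∧ x = f b) ∨ ∃ m, P m a ∧ P m b ∧ x = f m := by
  rcases h.trichotomy a b with ih | ih | ⟨m, c, c', h1, h2, h3, h4, h5⟩
  · rcases ih.cases_head with rfl | ⟨c, hac, hcb⟩
    · exact absurd rfl hab
    · obtain ⟨e, rfl⟩ := h.cross_anc hac hcb hx hx'
      exact Or.inl ⟨hac, e⟩
  · rcases ih.cases_head with rfl | ⟨c, hac, hcb⟩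
    · exact absurd rfl hab
    · obtain ⟨e, rfl⟩ := h.cross_anc hac hcb hx' hx
      exact Or.inr (Or.inl ⟨hac, e⟩)
  · obtain ⟨e, rfl⟩ := h.cross_sib h1 h2 h3 h4 h5 hx hx'
    obtain ⟨_, rfl⟩ := h.cross_sib h2 h1 h3.symm h5 h4 hx' hx
    exact Or.inr (Or.inr ⟨m, h1, h2, e⟩)

lemma injective (h : Placed P r lab f pp S) : Function.Injective f := by
  intro v w e
  by_contra hne
  rcases h.cross hne (x := f v) (right_mem_segment _ _ _) (by rw [e]; exact right_mem_segment _ _ _)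
    with ⟨h1, _⟩ | ⟨h1, _⟩ | ⟨m, h1, _, h2⟩
  · exact h.ne w (by rw [h.par _ _ h1, e])
  · exact h.ne v (by rw [h.par _ _ h1, e])
  · exact h.ne v (by rw [h.par _ _ h1, h2])

lemma notMem (h : Placed P r lab f pp S) {u v w : V} (huv : P u v) (h1 : w ≠ u) (h2 : w ≠ v) :
    f w ∉ segment ℝ (f u) (f v) := by
  intro hx
  rw [← h.par _ _ huv] at hx
  rcases h.cross h2.symm hx (right_mem_segment _ _ _) with ⟨h3, _⟩ | ⟨h3, _⟩ | ⟨m, h3, h4, h5⟩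
  · exact h2 (h.injective ‹_›)
  · exact h1 (h.uniq _ _ _ h3 huv)
  · exact h.ne w (by rw [h.par _ _ h4, h5])

lemma inter (h : Placed P r lab f pp S) {u v u' v' : V} (huv : P u v) (huv' : P u' v')
    (hne : s(u, v) ≠ s(u', v')) :
    segment ℝ (f u) (f v) ∩ segment ℝ (f u') (f v') =
      f '' {w | (w = u ∨ w = v) ∧ (w = u' ∨ w = v')} := by
  apply Set.Subset.antisymm
  · rintro x ⟨hx, hx'⟩
    rw [← h.par _ _ huv] at hx
    rw [← h.par _ _ huv'] at hx'
    have hv : v ≠ v' := by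
      rintro rfl
      exact hne (by rw [h.uniq _ _ _ huv huv'])
    rcases h.cross hv hx hx' with ⟨h3, h4⟩ | ⟨h3, h4⟩ | ⟨m, h3, h4, h5⟩
    · exact ⟨v, ⟨Or.inr rfl, Or.inl (h.uniq _ _ _ h3 huv')⟩, h4.symm⟩
    · exact ⟨v', ⟨Or.inl (h.uniq _ _ _ h3 huv), Or.inr rfl⟩, h4.symm⟩
    · exact ⟨m, ⟨Or.inl (h.uniq _ _ _ h3 huv), Or.inl (h.uniq _ _ _ h4 huv')⟩, h5.symm⟩
  · rintro _ ⟨w, ⟨h1, h2⟩, rfl⟩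
    constructor
    · rcases h1 with rfl | rfl
      · exact left_mem_segment _ _ _
      · exact right_mem_segment _ _ _
    · rcases h2 with rfl | rfl
      · exact left_mem_segment _ _ _
      · exact right_mem_segment _ _ _

lemma ccw (h : Placed P r lab f pp S) {p v a b : V} (hp : P p v) (ha : P v a) (hla : lab a = false)
    (hb : P v b) (hlb : lab b = true) : Ccw (f p - f v) (f a - f v) (f b - f v) := by
  obtain ⟨l₁, l₂, e, hc⟩ := h.node v
  obtain ⟨_, _, ea, -⟩ := h.node a
  obtain ⟨_, _, eb, -⟩ := h.node b
  have ho := (h.goodord v).2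
  have e1 := hc a ha
  have e2 := hc b hb
  rw [hla] at e1
  rw [hlb] at e2
  rw [e, h.par _ _ hp] at ho
  refine ho.1 _ ?_ _ ?_
  · rw [← show S a = l₁ from e1, ea]; rfl
  · rw [← show S b = l₂ from e2, eb]; rfl

end Placed

/-! ### The shape of a rooted tree -/

section Shape

variable {V : Type} (P : V → V → Prop) (lab : V → Bool)

open Classical in
/-- The shape of the part of the tree at and below `v`, cut off after `k` generations. -/
noncomputable def treeOf : ℕ → V → BT
  | 0, _ => BT.nil
  | k + 1, v =>
    BT.node (if h : ∃ c, P v c ∧ lab c = false then treeOf k h.choose else BT.nil)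
      (if h : ∃ c, P v c ∧ lab c = true then treeOf k h.choose else BT.nil)

variable {P lab}

lemma mono_depth {d : V → ℕ} (hd : ∀ u v, P u v → d u + 1 = d v) {u v : V}
    (h : ReflTransGen P u v) : d u ≤ d v := by
  induction h with
  | refl => exact le_rfl
  | tail _ h ih => have := hd _ _ h; omega

lemma desc_disjoint {d : V → ℕ} (hd : ∀ u v, P u v → d u + 1 = d v)
    (hu : ∀ u u' v, P u v → P u' v → u = u') {v a b w : V} (ha : P v a) (hb : P v b) (hab : a ≠ b)
    (haw : ReflTransGen P a w) : ¬ ReflTransGen P b w := by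
  have key : ∀ x y, P v x → P v y → ReflTransGen P x y → x = y := by
    intro x y hx hy hxy
    rcases hxy.cases_head with e | ⟨c, hc, hcy⟩
    · exact e
    · have := mono_depth hd hcy
      have := hd _ _ hc
      have := hd _ _ hx
      have := hd _ _ hy
      omega
  intro hbw
  rw [← reflTransGen_swap] at haw hbw
  have ru : Relator.RightUnique (Function.swap P) := fun x y z h1 h2 => hu _ _ x h1 h2
  rcases ReflTransGen.total_of_right_unique ru haw hbw with h | h
  · rw [reflTransGen_swap] at h
    exact hab (key b a hb ha h).symm
  · rw [reflTransGen_swap] at h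
    exact hab (key a b ha hb h)

lemma size_treeOf [Finite V] {d : V → ℕ} (hd : ∀ u v, P u v → d u + 1 = d v)
    (hu : ∀ u u' v, P u v → P u' v → u = u') (k : ℕ) :
    ∀ v, (treeOf P lab k v).size ≤ {w | ReflTransGen P v w}.ncard := by
  classical
  induction k with
  | zero => intro v; exact Nat.zero_le _
  | succ k ih =>
    intro v
    have hbelow : ∀ b, ∃ A : Set V, (∀ w ∈ A, ∃ c, P v c ∧ lab c = b ∧ ReflTransGen P c w) ∧
        (if h : ∃ c, P v c ∧ lab c = b then treeOf P lab k h.choose else BT.nil).size ≤ A.ncard := by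
      intro b
      split
      · rename_i h
        exact ⟨_, fun w hw => ⟨_, h.choose_spec.1, h.choose_spec.2, hw⟩, ih h.choose⟩
      · exact ⟨∅, by simp, by simp [BT.size]⟩
    obtain ⟨A, hA, hA'⟩ := hbelow false
    obtain ⟨B, hB, hB'⟩ := hbelow true
    have hdis : Disjoint A B := by
      rw [Set.disjoint_left]
      intro w h1 h2
      obtain ⟨c, hc, hl, hw⟩ := hA w h1
      obtain ⟨c', hc', hl', hw'⟩ := hB w h2
      refine desc_disjoint hd hu hc hc' ?_ hw hw'
      rintro rfl
      rw [hl] at hl'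
      cases hl'
    have hv : v ∉ A ∪ B := by
      rintro (h | h)
      · obtain ⟨c, hc, -, hw⟩ := hA v h
        have := mono_depth hd hw
        have := hd _ _ hc
        omega
      · obtain ⟨c, hc, -, hw⟩ := hB v h
        have := mono_depth hd hw
        have := hd _ _ hc
        omega
    have h1 := Set.ncard_insert_of_notMem hv (Set.toFinite _)
    rw [Set.ncard_union_eq hdis (Set.toFinite _) (Set.toFinite _)] at h1
    have h2 : insert v (A ∪ B) ⊆ {w | ReflTransGen P v w} := by
      rintro w (rfl | h | h)
      · exact ReflTransGen.refl
      · obtain ⟨c, hc, -, hw⟩ := hA w h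
        exact hw.head hc
      · obtain ⟨c, hc, -, hw⟩ := hB w h
        exact hw.head hc
    have h3 := Set.ncard_le_ncard h2 (Set.toFinite _)
    simp only [treeOf, BT.size]
    omega

/-- The left (`false`) or right (`true`) subtree. -/
def child (b : Bool) : DT → DT
  | DT.nil => DT.nil
  | DT.node _ l₁ l₂ => if b then l₂ else l₁

/-- The position of the root; the value at the empty tree is irrelevant. -/
def pos : DT → Pt
  | DT.nil => 0
  | DT.node p _ _ => p

/-- The subtree reached from the root of `D` along the labels of the last `k` ancestors of `v`,
including `v` itself. -/
def subAt (D : DT) (par : V → V) (lab : V → Bool) : ℕ → V → DT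
  | 0, _ => D
  | k + 1, v => child (lab v) (subAt D par lab k (par v))

/-- A drawing of the shape of a rooted tree gives positions for its vertices. -/
lemma exists_placed {r : V} {d : V → ℕ} {n : ℕ} (hr : d r = 0) (hn : ∀ v, d v < n)
    (hd : ∀ u v, P u v → d u + 1 = d v) (hu : ∀ u u' v, P u v → P u' v → u = u')
    (hi : ∀ u v w, P u v → P u w → lab v = lab w → v = w) (hreach : ∀ v, ReflTransGen P r v)
    {q : Pt} {D : DT} (hD : D.shape = treeOf P lab n r) (hg : Good q D) (ho : Ord q D) :
    ∃ f pp S, Placed P r lab f pp S ∧ ∀ v, f v ∈ D.verts := by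
  classical
  have hpar : ∀ v, ∃ u, ∀ u', P u' v → u' = u := fun v => by
    by_cases h : ∃ u, P u v
    · obtain ⟨u, hu1⟩ := h
      exact ⟨u, fun u' h' => hu _ _ _ h' hu1⟩
    · exact ⟨v, fun u' h' => absurd ⟨u', h'⟩ h⟩
  choose par hpar using hpar
  set S : V → DT := fun v => subAt D par lab (d v) v with hS
  have hSr : S r = D := by simp [hS, hr, subAt]
  have hSc : ∀ u v, P u v → S v = child (lab v) (S u) := by
    intro u v h
    simp only [hS, ← hd _ _ h, subAt, ← hpar v u h]
  have hshape : ∀ v, (S v).shape = treeOf P lab (n - d v) v := by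
    intro v
    induction hreach v with
    | refl => rw [hSr, hD, hr, Nat.sub_zero]
    | @tail u v _ huv ih =>
      have h1 := hd _ _ huv
      have h2 := hn v
      obtain ⟨k, hk⟩ : ∃ k, n - d u = k + 1 := ⟨n - d u - 1, by omega⟩
      have hk' : n - d v = k := by omega
      rw [hSc _ _ huv, hk']
      rw [hk] at ih
      cases hSu : S u with
      | nil => rw [hSu] at ih; cases ih
      | node p l₁ l₂ =>
        rw [hSu] at ih
        simp only [shape, treeOf, BT.node.injEq] at ih
        have hex : ∃ c, P u c ∧ lab c = lab v := ⟨v, huv, rfl⟩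
        have hch : ∀ h : ∃ c, P u c ∧ lab c = lab v, h.choose = v := fun h =>
          hi _ _ _ h.choose_spec.1 huv h.choose_spec.2
        cases hl : lab v with
        | false =>
          rw [hl] at hex hch
          rw [dif_pos hex, hch] at ih
          exact ih.1
        | true =>
          rw [hl] at hex hch
          rw [dif_pos hex, hch] at ih
          exact ih.2
  have hnode : ∀ v, ∃ l₁ l₂, S v = DT.node (pos (S v)) l₁ l₂ := by
    intro v
    have h1 := hshape v
    obtain ⟨k, hk⟩ : ∃ k, n - d v = k + 1 := ⟨n - d v - 1, by have := hn v; omega⟩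
    rw [hk] at h1
    cases hSv : S v with
    | nil => rw [hSv] at h1; cases h1
    | node p l₁ l₂ => exact ⟨l₁, l₂, rfl⟩
  have hverts : ∀ v, (S v).verts ⊆ D.verts := by
    intro v
    induction hreach v with
    | refl => rw [hSr]
    | @tail u v _ huv ih =>
      refine subset_trans ?_ ih
      rw [hSc _ _ huv]
      cases S u with
      | nil => exact subset_rfl
      | node p l₁ l₂ =>
        simp only [child]
        split
        · exact Set.subset_union_right
        · exact fun x hx => Or.inl (Or.inr hx)
  refine ⟨fun v => pos (S v), fun v => if v = r then q else pos (S (par v)), S, ⟨?_, ?_, ?_, ?_,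
    hreach, hi, hu⟩, ?_⟩
  · intro u v h
    have hne : v ≠ r := by
      rintro rfl
      have := hd _ _ h
      omega
    simp only [if_neg hne, ← hpar v u h]
  · intro v
    obtain ⟨l₁, l₂, e⟩ := hnode v
    refine ⟨l₁, l₂, e, fun w hw => ?_⟩
    rw [hSc _ _ hw, e]
    rfl
  · simpa [hSr] using hg
  · simpa [hSr] using ho
  · intro v
    obtain ⟨l₁, l₂, e⟩ := hnode v
    apply hverts v
    rw [e]
    exact Or.inl (Or.inl rfl)

end Shape

end TreeDraw

namespace TreeDraw
open DT Relation

/-! ### The parent relation of a rooted tree -/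

section Parent

variable {V : Type} {G : SimpleGraph V} {r : V}

lemma isParent_reach (hG : G.IsTree) (v : V) : ReflTransGen (IsParent G r) r v := by
  obtain ⟨m, hm⟩ : ∃ m, G.dist r v = m := ⟨_, rfl⟩
  induction m generalizing v with
  | zero =>
    rw [hG.connected.dist_eq_zero_iff] at hm
    subst hm
    exact ReflTransGen.refl
  | succ m ih =>
    obtain ⟨w, hw⟩ := hG.connected.exists_walk_length_eq_dist v r
    rw [dist_comm, hm] at hw
    cases w with
    | nil => simp at hw
    | @cons _ u _ h p =>
      rw [Walk.length_cons] at hw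
      have h1 := dist_le p
      rw [dist_comm] at h1
      have h2 := hG.dist_eq_dist_add_one_of_adj r h
      exact (ih u (by omega)).tail ⟨h.symm, by omega⟩

lemma isParent_unique (hG : G.IsTree) {u u' v : V} (h : IsParent G r u v)
    (h' : IsParent G r u' v) : u = u' := by
  obtain ⟨p, hp⟩ := hG.connected.exists_walk_length_eq_dist r u
  obtain ⟨p', hp'⟩ := hG.connected.exists_walk_length_eq_dist r u'
  have e1 : (p.concat h.1).IsPath :=
    Walk.isPath_of_length_eq_dist _ (by rw [Walk.length_concat, hp, h.2])
  have e2 : (p'.concat h'.1).IsPath :=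
    Walk.isPath_of_length_eq_dist _ (by rw [Walk.length_concat, hp', h'.2])
  have e : p.concat h.1 = p'.concat h'.1 :=
    congrArg Subtype.val ((hG.isAcyclic.subsingleton_path r v).elim ⟨_, e1⟩ ⟨_, e2⟩)
  have := congrArg Walk.penultimate e
  simpa using this

lemma isParent_or (hG : G.IsTree) {u v : V} (h : G.Adj u v) :
    IsParent G r u v ∨ IsParent G r v u := by
  rcases hG.dist_eq_dist_add_one_of_adj r h with e | e
  · exact Or.inr ⟨h.symm, e.symm⟩
  · exact Or.inl ⟨h, e.symm⟩

lemma dist_lt_card [Fintype V] (hG : G.IsTree) (v : V) : G.dist r v < Fintype.card V := by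
  obtain ⟨p, hp, e⟩ := hG.connected.exists_path_of_dist r v
  exact e ▸ hp.length_lt

lemma Placed.straightLine {lab : V → Bool} {f pp : V → Pt} {S : V → DT} (hG : G.IsTree)
    (h : Placed (IsParent G r) r lab f pp S) : IsStraightLineDrawing G f := by
  refine ⟨h.injective, fun u v w huv h1 h2 => ?_, fun u v u' v' huv huv' hne => ?_⟩
  · rcases isParent_or (r := r) hG huv with e | e
    · exact h.notMem e h1 h2
    · rw [segment_symm]; exact h.notMem e h2 h1
  · rcases isParent_or (r := r) hG huv with e | e <;>
      rcases isParent_or (r := r) hG huv' with e' | e'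
    · exact h.inter e e' hne
    · rw [Sym2.eq_swap (a := u')] at hne
      rw [segment_symm ℝ (f u'), h.inter e e' hne]
      simp only [or_comm]
    · rw [Sym2.eq_swap (a := u)] at hne
      rw [segment_symm ℝ (f u), h.inter e e' hne]
      simp only [or_comm]
    · rw [Sym2.eq_swap (a := u), Sym2.eq_swap (a := u')] at hne
      rw [segment_symm ℝ (f u), segment_symm ℝ (f u'), h.inter e e' hne]
      simp only [or_comm]

end Parent

end TreeDraw

/-- Every ordered binary tree of size `n` has a straight-line order-preserving grid drawing
of area `n·2^{O(log* n)}`. -/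
theorem stmt14 : ∃ C : ℝ, 0 < C ∧
    ∀ (n : ℕ), 1 ≤ n →
    ∀ (V : Type) [Fintype V] (G : SimpleGraph V), G.IsTree → Fintype.card V = n →
    ∀ (r : V) (lab : V → Bool),
    (∀ u v w : V, IsParent G r u v → IsParent G r u w → lab v = lab w → v = w) →
    ∃ (W H : ℕ) (f : V → ℝ × ℝ), IsGridDrawing G f W H ∧
      IsOrderPreserving G r lab f ∧
      (W : ℝ) * H ≤ (n : ℝ) * (2 : ℝ) ^ (C * (logStar n : ℝ)) := by
  refine ⟨23, by norm_num, ?_⟩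
  intro n hn V _ G hG hcard r lab hlab
  obtain ⟨N, hN, hNb⟩ := TreeDraw.square_bound hn
  have hd : ∀ u v, IsParent G r u v → G.dist r u + 1 = G.dist r v := fun _ _ h => h.2
  have hu : ∀ u u' v, IsParent G r u v → IsParent G r u' v → u = u' := fun _ _ _ =>
    TreeDraw.isParent_unique hG
  have hsize : (TreeDraw.treeOf (IsParent G r) lab n r).size ≤ n :=
    (TreeDraw.size_treeOf hd hu n r).trans ((Set.ncard_le_card _).trans (by simp [hcard]))
  obtain ⟨D, hD, hv, -, hgo⟩ := hN _ hsize
  -- a translation by `(1, 1)` makes the grid start at `1`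
  set g : TreeDraw.Aff := ⟨1, 0, 0, 1, 1, 1⟩ with hg
  have h1 := TreeDraw.tr_goodord (s := false) (g := g) (by simp [hg, TreeDraw.Aff.Det]) _ rfl
    (hgo (-1, 0) (by norm_num))
  obtain ⟨f, pp, S, hP, hf⟩ := TreeDraw.exists_placed (n := n) (lab := lab)
    (show G.dist r r = 0 from SimpleGraph.dist_self)
    (fun v => hcard ▸ TreeDraw.dist_lt_card hG v) hd hu hlab (TreeDraw.isParent_reach hG)
    (D := D.tr false g) (by rw [TreeDraw.DT.shape_tr_false, hD]) h1.1 h1.2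
  refine ⟨N, N, f, ⟨hP.straightLine hG, fun v => ?_⟩, ?_, ?_⟩
  · have := hf v
    rw [TreeDraw.DT.verts_tr] at this
    obtain ⟨p, hp, e⟩ := this
    obtain ⟨i, j, rfl, _, _, _, _⟩ := hv hp
    refine ⟨i + 1, j + 1, by omega, by omega, by omega, by omega, ?_⟩
    rw [← e]
    ext <;> simp [TreeDraw.Aff.ap, hg]
  · intro p v l rc hp hl hll hr hlr
    exact TreeDraw.ccwAngle_lt (hP.ccw hp hl hll hr hlr)
  · have e : (2 : ℝ) ^ ((23 : ℝ) * (logStar n : ℝ)) = ((2 ^ (23 * logStar n) : ℕ) : ℝ) := by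
      rw [show (23 : ℝ) * (logStar n : ℝ) = ((23 * logStar n : ℕ) : ℝ) by push_cast; ring,
        Real.rpow_natCast]
      push_cast
      rfl
    rw [e]
    exact_mod_cast hNb
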